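/- Assume q ≤ 1/2, q + 2λ ≤ 1, λ > 0, and 3 ≤ m ≤ K. Let 1 ≤ i < j ≤ n. Then E_ij[S_ij] = ((n−2)!/(n−m)!)·(λ^{(m+1)/2}/K)^{m−2} and E_¬ij[S_ij] = 0. Moreover, if for some ρ > 0 both (n−2)·λ^{(m+1)/2}/K ≥ ρ·(m−2)²·(1+q̄/λ)^{(m+1)/2} and ((n−2)/K²)·(λ²/q̄)^{(m+1)/2} ≥ ρ·(m−2) hold, then var_ij(S_ij) ≤ E_ij[S_ij]²·[ (2/ρ)^{m−2} + ( (m−2)·(1+q̄/λ)^{m+1} + 1/ρ )^{m−2} · (1+q̄/λ)^{1/2} · λ^{1/2} ] and var_¬ij(S_ij) ≤ E_ij[S_ij]²·[ (2/ρ)^{m−2} + (1/ρ)^{m−2} ]. -/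

import Mathlib

/-!
Write `m = N + 2`, `q̄ = q (1 - q)` and `p̄ = q̄ + λ (1 - 2 q)`. The product attached to an injection
depends only on the set `A` of images of `v₃, …, v_m`, so `S_{ij} = N! ∑_A χ_A`, the sum running over
the `N`-subsets of `{1, …, n} \ {i, j}` (`cliqueStat_eq`). The first two moments of `S_{ij}` thus
reduce to the mixed moments `J A A'` of `χ_A` and `χ_{A'}`; the case `A' = ∅` gives the mean.

Given the labels, the edges are independent: an edge of exactly one of the two monomials contributes
`λ` or `0` according to whether its ends share a label, a common edge contributes `p̄` or `q̄`.

* If `A ⊄ A'`, the edges of exactly one monomial connect `{i, j} ∪ A ∪ A'`, so only labelings constant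
  there count (`Ey_chi_mul_of_not_subset`). Hence `J A A' = 0` when `z_i ≠ z_j`, and when `z_i = z_j`
  it equals the squared mean contribution times a factor `(p̄ / λ²)^{t (t + 3) / 2} K^t`, where
  `t = |A ∩ A'|`. The overlap is hypergeometric and dominated by `C(N, t) (N / (n - 2))^t`
  (`sum_overlap_le`); the term `t = 0` is at most the squared mean and cancels in the variance, the
  rest is summed by the binomial theorem (`offdiag_num`).

* If `A = A'`, the vertices of `A` are revealed one at a time, and those whose label has been seen
  before are counted. There are at most `(m + 1) / 2` monochromatic edges per such repeated vertex
  (`two_mul_mono_le`), and the `k`-th vertex of `A` (from `k = 0`) has at most `k + d` labels that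
  repeat, `d` being the number of labels of `i, j` (`sum_rep_le`). With the two conditions on `n` the
  diagonal is at most the squared mean times `ρ^{-N} ∏_{k < N} (1 + (k + d) / N)`. The product is at
  most `2^N` for `d = 1`, that is `z_i = z_j`, and at most `2^N + 1` for `d = 2`, that is `z_i ≠ z_j`.
-/

open Classical Finset

noncomputable section

namespace SBM

/-- Index type for the edge slots of a graph on `n` nodes: ordered pairs `i < j`. -/
abbrev Pairs (n : ℕ) := {p : Fin n × Fin n // p.1 < p.2}

/-- A configuration of edges: one Boolean per pair `i < j`. -/
abbrev EdgeConf (n : ℕ) := Pairs n → Bool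

/-- Community labels of the `n` nodes, with `K` communities. -/
abbrev Lab (n K : ℕ) := Fin n → Fin K

/-- The recentered symmetric adjacency entries `Y i j = Y*_{ij} - q` (and `0` on the diagonal). -/
def Ymat (n : ℕ) (q : ℝ) (y : EdgeConf n) (i j : Fin n) : ℝ :=
  if h : i = j then 0
  else (if y ⟨(min i j, max i j), min_lt_max.mpr h⟩ then 1 else 0) - q

/-- Conditional connection probability of a pair given the labels. -/
def pEdge (n K : ℕ) (q lam : ℝ) (z : Lab n K) (p : Pairs n) : ℝ :=
  if z p.1.1 = z p.1.2 then q + lam else q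

/-- SBM probability weight of a configuration `(z, y)`: labels are i.i.d. uniform on `Fin K`
and, conditionally on `z`, edges are independent Bernoulli. -/
def wt (n K : ℕ) (q lam : ℝ) (z : Lab n K) (y : EdgeConf n) : ℝ :=
  ((K : ℝ)⁻¹) ^ n *
    ∏ p : Pairs n, (if y p then pEdge n K q lam z p else 1 - pEdge n K q lam z p)

/-- Expectation under the SBM. -/
def expec (n K : ℕ) (q lam : ℝ) (F : Lab n K → EdgeConf n → ℝ) : ℝ :=
  ∑ z : Lab n K, ∑ y : EdgeConf n, wt n K q lam z y * F z y

/-- Expectation conditionally on `z i = z j`. -/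
def expecEq (n K : ℕ) (q lam : ℝ) (i j : Fin n) (F : Lab n K → EdgeConf n → ℝ) : ℝ :=
  expec n K q lam (fun z y => if z i = z j then F z y else 0) /
    expec n K q lam (fun z _ => if z i = z j then 1 else 0)

/-- Expectation conditionally on `z i ≠ z j`. -/
def expecNe (n K : ℕ) (q lam : ℝ) (i j : Fin n) (F : Lab n K → EdgeConf n → ℝ) : ℝ :=
  expec n K q lam (fun z y => if z i ≠ z j then F z y else 0) /
    expec n K q lam (fun z _ => if z i ≠ z j then 1 else 0)

/-- Variance conditionally on `z i = z j`. -/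
def varEq (n K : ℕ) (q lam : ℝ) (i j : Fin n) (F : Lab n K → EdgeConf n → ℝ) : ℝ :=
  expecEq n K q lam i j (fun z y => F z y ^ 2) - expecEq n K q lam i j F ^ 2

/-- Variance conditionally on `z i ≠ z j`. -/
def varNe (n K : ℕ) (q lam : ℝ) (i j : Fin n) (F : Lab n K → EdgeConf n → ℝ) : ℝ :=
  expecNe n K q lam i j (fun z y => F z y ^ 2) - expecNe n K q lam i j F ^ 2

/-- The (centered) membership indicator `x = 1{z i0 = z i1} - 1/K`. -/
def xind (n K : ℕ) (i0 i1 : Fin n) (z : Lab n K) : ℝ :=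
  (if z i0 = z i1 then 1 else 0) - 1 / K

/-- The edges of the `m`-clique with the edge `(0,1)` removed. -/
def cliqueEdges (m : ℕ) (hm : 2 ≤ m) : Finset (Fin m × Fin m) :=
  Finset.univ.filter fun p : Fin m × Fin m =>
    p.1 < p.2 ∧ ¬(p.1 = (⟨0, by omega⟩ : Fin m) ∧ p.2 = (⟨1, by omega⟩ : Fin m))

/-- The clique-count statistic `S_{ij}` restricted to injections with range inside `T`:
sum over injections `π` with `π 0 = i`, `π 1 = j` of the product of the `Y` entries over
the edges of the `m`-clique minus the edge `(0,1)`. -/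
def cliqueStatOn (n : ℕ) (q : ℝ) (m : ℕ) (hm : 2 ≤ m) (i j : Fin n) (T : Finset (Fin n))
    (y : EdgeConf n) : ℝ :=
  ∑ π : Fin m ↪ Fin n,
    if π ⟨0, by omega⟩ = i ∧ π ⟨1, by omega⟩ = j ∧ (∀ v, π v ∈ T) then
      ∏ p ∈ cliqueEdges m hm, Ymat n q y (π p.1) (π p.2)
    else 0

/-- The clique-count statistic `S_{ij}`. -/
def cliqueStat (n : ℕ) (q : ℝ) (m : ℕ) (hm : 2 ≤ m) (i j : Fin n) (y : EdgeConf n) : ℝ :=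
  cliqueStatOn n q m hm i j Finset.univ y

/-! ### Reduction to vertex sets -/

/-- The edge slots of the image of the clique minus `(v₁, v₂)` whose vertices are sent to
`i`, `j` and the elements of `A`. -/
def Es {n : ℕ} (i j : Fin n) (A : Finset (Fin n)) : Finset (Pairs n) :=
  Finset.univ.filter fun p : Pairs n =>
    p.1.1 ∈ insert i (insert j A) ∧ p.1.2 ∈ insert i (insert j A) ∧ ¬(p.1.1 = i ∧ p.1.2 = j)

/-- The monomial attached to the vertex set `A`: the product of `Y` over `Es i j A`. -/
def chi {n : ℕ} (q : ℝ) (i j : Fin n) (A : Finset (Fin n)) (y : EdgeConf n) : ℝ :=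
  ∏ p ∈ Es i j A, ((if y p then 1 else 0) - q)

/-- The possible images of `v₃, …, v_m` (here `m = N + 2`). -/
def vsets {n : ℕ} (i j : Fin n) (N : ℕ) : Finset (Finset (Fin n)) :=
  Finset.powersetCard N (Finset.univ \ {i, j})

/-- Expectation over the edges, conditionally on all the labels `z`. -/
def Ey (n K : ℕ) (q lam : ℝ) (z : Lab n K) (F : EdgeConf n → ℝ) : ℝ :=
  ∑ y : EdgeConf n,
    (∏ p : Pairs n, (if y p then pEdge n K q lam z p else 1 - pEdge n K q lam z p)) * F y

/-- The product attached to an injection `π` depends only on the image of `π`. -/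
theorem prod_Ymat_eq_chi (n N : ℕ) (q : ℝ) (i j : Fin n) (hij : i < j) (y : EdgeConf n)
    (π : Fin (N + 2) ↪ Fin n) (h0 : π 0 = i) (h1 : π 1 = j) :
    ∏ p ∈ cliqueEdges (N + 2) (by omega), Ymat n q y (π p.1) (π p.2) =
      chi q i j ((Finset.univ.map π) \ {i, j}) y := by
  have hR : ∀ x, x ∈ insert i (insert j ((Finset.univ.map π) \ {i, j})) ↔ ∃ u, π u = x := by
    intro x
    simp only [Finset.mem_insert, Finset.mem_sdiff, Finset.mem_map, Finset.mem_univ, true_and,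
      Finset.mem_singleton, not_or]
    constructor
    · rintro (h | h | ⟨h, -⟩)
      · exact ⟨0, by rw [h0, h]⟩
      · exact ⟨1, by rw [h1, h]⟩
      · exact h
    · intro h
      by_cases hi : x = i
      · exact Or.inl hi
      by_cases hj : x = j
      · exact Or.inr (Or.inl hj)
      · exact Or.inr (Or.inr ⟨h, hi, hj⟩)
  have hlt : ∀ p ∈ cliqueEdges (N + 2) (by omega), p.1 < p.2 := by
    intro p hp
    exact ((Finset.mem_filter.mp hp).2).1
  have hne : ∀ p ∈ cliqueEdges (N + 2) (by omega), π p.1 ≠ π p.2 := by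
    intro p hp
    exact π.injective.ne (ne_of_lt (hlt p hp))
  unfold chi
  refine Finset.prod_bij
    (fun p hp => ⟨(min (π p.1) (π p.2), max (π p.1) (π p.2)), min_lt_max.mpr (hne p hp)⟩)
    ?_ ?_ ?_ ?_
  · intro p hp
    have hp2 := (Finset.mem_filter.mp hp).2
    simp only [Es, Finset.mem_filter, Finset.mem_univ, true_and, hR]
    refine ⟨?_, ?_, ?_⟩
    · rcases min_choice (π p.1) (π p.2) with h | h <;> rw [h] <;> exact ⟨_, rfl⟩
    · rcases max_choice (π p.1) (π p.2) with h | h <;> rw [h] <;> exact ⟨_, rfl⟩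
    · rintro ⟨ha, hb⟩
      rcases le_total (π p.1) (π p.2) with h | h
      · rw [min_eq_left h, ← h0] at ha
        rw [max_eq_right h, ← h1] at hb
        exact hp2.2 ⟨π.injective ha, π.injective hb⟩
      · rw [min_eq_right h, ← h0] at ha
        rw [max_eq_left h, ← h1] at hb
        have h2 := π.injective ha
        have h3 := π.injective hb
        have := hp2.1
        rw [h2, h3] at this
        exact absurd this (by simp)
  · intro p hp p' hp' h
    have hl := hlt p hp
    have hl' := hlt p' hp'
    simp only [Subtype.mk.injEq, Prod.mk.injEq] at h
    obtain ⟨ha, hb⟩ := h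
    rcases le_total (π p.1) (π p.2) with h | h <;>
    rcases le_total (π p'.1) (π p'.2) with h' | h'
    · rw [min_eq_left h, min_eq_left h'] at ha
      rw [max_eq_right h, max_eq_right h'] at hb
      exact Prod.ext (π.injective ha) (π.injective hb)
    · rw [min_eq_left h, min_eq_right h'] at ha
      rw [max_eq_right h, max_eq_left h'] at hb
      have := π.injective ha
      have := π.injective hb
      omega
    · rw [min_eq_right h, min_eq_left h'] at ha
      rw [max_eq_left h, max_eq_right h'] at hb
      have := π.injective ha
      have := π.injective hb
      omega
    · rw [min_eq_right h, min_eq_right h'] at ha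
      rw [max_eq_left h, max_eq_left h'] at hb
      exact Prod.ext (π.injective hb) (π.injective ha)
  · rintro ⟨⟨a, b⟩, hab⟩ hp
    simp only [Es, Finset.mem_filter, Finset.mem_univ, true_and, hR] at hp
    obtain ⟨⟨u, rfl⟩, ⟨v, rfl⟩, hn⟩ := hp
    simp only at hab hn
    have huv : u ≠ v := fun h => by rw [h] at hab; exact lt_irrefl _ hab
    rcases lt_or_gt_of_ne huv with h | h
    · refine ⟨(u, v), ?_, ?_⟩
      · simp only [cliqueEdges, Finset.mem_filter, Finset.mem_univ, true_and]
        refine ⟨h, ?_⟩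
        rintro ⟨ha, hb⟩
        exact hn ⟨by rw [← h0, ha]; rfl, by rw [← h1, hb]; rfl⟩
      · simp [min_eq_left hab.le, max_eq_right hab.le]
    · refine ⟨(v, u), ?_, ?_⟩
      · simp only [cliqueEdges, Finset.mem_filter, Finset.mem_univ, true_and]
        refine ⟨h, ?_⟩
        rintro ⟨ha, hb⟩
        have e1 : π u = j := by rw [← h1, hb]; rfl
        have e2 : π v = i := by rw [← h0, ha]; rfl
        rw [e1, e2] at hab
        exact absurd hab (not_lt.mpr hij.le)
      · simp [min_eq_right hab.le, max_eq_left hab.le]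
  · intro p hp
    simp [Ymat, hne p hp]

/-- The embeddings with image `{i, j} ∪ A` sending `v₁, v₂` to `i, j` are the bijections from
the remaining vertices to `A`. -/
theorem card_fiber (n N : ℕ) (i j : Fin n) (hij : i < j) (A : Finset (Fin n))
    (hA : A ∈ vsets i j N) :
    (Finset.univ.filter fun π : Fin (N + 2) ↪ Fin n =>
      (π 0 = i ∧ π 1 = j) ∧ (Finset.univ.map π) \ {i, j} = A).card = N.factorial := by
  obtain ⟨hsub, hcard⟩ := Finset.mem_powersetCard.mp hA
  have hi : i ∉ A := fun h => by simpa using hsub h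
  have hj : j ∉ A := fun h => by simpa using hsub h
  have hc : Fintype.card (Fin N ↪ A) = N.factorial := by
    rw [Fintype.card_embedding_eq]; simp [hcard, Nat.descFactorial_self]
  rw [← hc, ← Finset.card_univ]
  have hinj : ∀ f : Fin N ↪ A, Function.Injective
      (Fin.cons i (Fin.cons j (fun k => ((f k : A) : Fin n))) : Fin (N + 2) → Fin n) := by
    intro f
    rw [Fin.cons_injective_iff, Fin.cons_injective_iff]
    refine ⟨?_, ?_, ?_⟩
    · rintro ⟨k, hk⟩
      refine Fin.cases ?_ (fun k => ?_) k hk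
      · intro h; simp at h; exact hij.ne' h
      · intro h; simp at h; exact hi (h ▸ (f k).2)
    · rintro ⟨k, hk⟩
      exact hj (hk ▸ (f k).2)
    · intro a b h
      exact f.injective (Subtype.ext h)
  symm
  refine Finset.card_bij (fun f _ => ⟨_, hinj f⟩) ?_ ?_ ?_
  · intro f _
    simp only [Finset.mem_filter, Finset.mem_univ, true_and]
    refine ⟨⟨rfl, rfl⟩, ?_⟩
    have hbij : Function.Bijective f := by
      rw [Fintype.bijective_iff_injective_and_card]
      exact ⟨f.injective, by simp [hcard]⟩
    ext x
    simp only [Finset.mem_sdiff, Finset.mem_map, Finset.mem_univ, true_and,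
      Function.Embedding.coeFn_mk, Finset.mem_insert, Finset.mem_singleton, not_or]
    constructor
    · rintro ⟨⟨k, hk⟩, hxi, hxj⟩
      refine Fin.cases ?_ (fun k => ?_) k hk
      · intro h; exact absurd h.symm hxi
      · refine Fin.cases ?_ (fun k => ?_) k
        · intro h; exact absurd h.symm hxj
        · intro h
          simp at h; exact h ▸ (f k).2
    · intro hx
      refine ⟨?_, fun h => hi (h ▸ hx), fun h => hj (h ▸ hx)⟩
      obtain ⟨k, hk⟩ := hbij.2 ⟨x, hx⟩
      exact ⟨k.succ.succ, by simp [hk]⟩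
  · intro f _ g _ h
    ext k
    have := congrArg (fun e : Fin (N + 2) ↪ Fin n => e k.succ.succ) h
    simp at this
    rw [this]
  · intro π hπ
    simp only [Finset.mem_filter, Finset.mem_univ, true_and] at hπ
    obtain ⟨⟨h0, h1⟩, h2⟩ := hπ
    have hmem : ∀ k : Fin N, π k.succ.succ ∈ A := by
      intro k
      rw [← h2]
      simp only [Finset.mem_sdiff, Finset.mem_map, Finset.mem_univ, true_and,
        Finset.mem_insert, Finset.mem_singleton, not_or]
      refine ⟨⟨_, rfl⟩, ?_, ?_⟩
      · rw [← h0]; exact π.injective.ne (Fin.succ_ne_zero _)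
      · rw [← h1]; apply π.injective.ne
        intro h
        have := congrArg Fin.val h
        simp at this
    refine ⟨⟨fun k => ⟨π k.succ.succ, hmem k⟩, ?_⟩, Finset.mem_univ _, ?_⟩
    · intro a b h
      have := π.injective (congrArg Subtype.val h)
      simpa using this
    · ext k
      refine Fin.cases ?_ (fun k => ?_) k
      · simp [h0]
      · refine Fin.cases ?_ (fun k => ?_) k
        · simp [h1]
        · rfl

/-- Grouping the injections by their image: `S_{ij}` is `N!` times the sum of the monomials over
the `N`-subsets of `{1, …, n} \ {i, j}`. -/
theorem cliqueStat_eq (n N : ℕ) (q : ℝ) (i j : Fin n) (hij : i < j) (y : EdgeConf n) :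
    cliqueStat n q (N + 2) (by omega) i j y =
      (N.factorial : ℝ) * ∑ A ∈ vsets i j N, chi q i j A y := by
  have e0 : (⟨0, by omega⟩ : Fin (N + 2)) = 0 := rfl
  have e1 : (⟨1, by omega⟩ : Fin (N + 2)) = 1 := rfl
  unfold cliqueStat cliqueStatOn
  simp only [Finset.mem_univ, implies_true, and_true, e0, e1]
  rw [← Finset.sum_filter]
  rw [← Finset.sum_fiberwise_of_maps_to
    (s := Finset.univ.filter fun π : Fin (N + 2) ↪ Fin n => π 0 = i ∧ π 1 = j)
    (t := vsets i j N) (g := fun π => (Finset.univ.map π) \ {i, j})]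
  · rw [Finset.mul_sum]
    refine Finset.sum_congr rfl fun A hA => ?_
    rw [Finset.filter_filter, ← card_fiber n N i j hij A hA, ← nsmul_eq_mul]
    refine Finset.sum_eq_card_nsmul ?_
    intro π hπ
    simp only [Finset.mem_filter, Finset.mem_univ, true_and] at hπ
    rw [prod_Ymat_eq_chi n N q i j hij y π hπ.1.1 hπ.1.2, hπ.2]
  · intro π hπ
    simp only [Finset.mem_filter, Finset.mem_univ, true_and] at hπ
    refine Finset.mem_powersetCard.mpr ⟨Finset.sdiff_subset_sdiff (Finset.subset_univ _) le_rfl, ?_⟩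
    rw [Finset.card_sdiff_of_subset, Finset.card_map, Finset.card_pair hij.ne]
    · simp
    · intro x hx
      simp only [Finset.mem_insert, Finset.mem_singleton] at hx
      simp only [Finset.mem_map, Finset.mem_univ, true_and]
      rcases hx with rfl | rfl
      · exact ⟨0, hπ.1⟩
      · exact ⟨1, hπ.2⟩

/-! ### Moments conditionally on the labels -/

theorem Ey_prod (n K : ℕ) (q lam : ℝ) (z : Lab n K) (h : Pairs n → Bool → ℝ) :
    Ey n K q lam z (fun y => ∏ p, h p (y p)) =
      ∏ p, (pEdge n K q lam z p * h p true + (1 - pEdge n K q lam z p) * h p false) := by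
  unfold Ey
  have : ∀ p : Pairs n, pEdge n K q lam z p * h p true + (1 - pEdge n K q lam z p) * h p false =
      ∑ b : Bool, (if b then pEdge n K q lam z p else 1 - pEdge n K q lam z p) * h p b := by
    intro p; simp
  simp_rw [this]
  rw [Finset.prod_univ_sum, Fintype.piFinset_univ]
  refine Finset.sum_congr rfl fun y _ => ?_
  rw [Finset.prod_mul_distrib]

theorem Ey_one (n K : ℕ) (q lam : ℝ) (z : Lab n K) : Ey n K q lam z (fun _ => 1) = 1 := by
  have := Ey_prod n K q lam z (fun _ _ => 1)
  simpa using this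

/-- Conditionally on the labels the edges are independent, so mixed moments factorise: a shared
edge contributes `p̄` or `q̄`, an edge in exactly one of the two monomials contributes `λ` or `0`. -/
theorem Ey_chi_mul (n K : ℕ) (q lam : ℝ) (i j : Fin n) (z : Lab n K) (A A' : Finset (Fin n)) :
    Ey n K q lam z (fun y => chi q i j A y * chi q i j A' y) =
      ∏ p : Pairs n,
        (if p ∈ Es i j A then
          (if p ∈ Es i j A' then
            (if z p.1.1 = z p.1.2 then q * (1 - q) + lam * (1 - 2 * q) else q * (1 - q))
          else (if z p.1.1 = z p.1.2 then lam else 0))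
        else (if p ∈ Es i j A' then (if z p.1.1 = z p.1.2 then lam else 0) else 1)) := by
  have key : ∀ y : EdgeConf n, chi q i j A y * chi q i j A' y = ∏ p : Pairs n,
      ((if p ∈ Es i j A then ((if y p then 1 else 0) - q) else 1) *
        (if p ∈ Es i j A' then ((if y p then 1 else 0) - q) else 1) : ℝ) := by
    intro y
    rw [Finset.prod_mul_distrib, Finset.prod_ite_mem, Finset.prod_ite_mem, Finset.univ_inter,
      Finset.univ_inter, chi, chi]
  have h2 := Ey_prod n K q lam z (fun (p : Pairs n) (b : Bool) =>
    ((if p ∈ Es i j A then ((if b then 1 else 0) - q) else 1) *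
      (if p ∈ Es i j A' then ((if b then 1 else 0) - q) else 1) : ℝ))
  rw [funext key, h2]
  refine Finset.prod_congr rfl fun p _ => ?_
  unfold pEdge
  by_cases h1 : p ∈ Es i j A <;> by_cases h2 : p ∈ Es i j A' <;>
    by_cases h3 : z p.1.1 = z p.1.2 <;>
    simp only [h1, h2, h3, if_true, if_false, Bool.false_eq_true] <;> ring

theorem Es_empty {n : ℕ} (i j : Fin n) (hij : i < j) : Es i j ∅ = ∅ := by
  ext ⟨⟨a, b⟩, hab⟩
  simp only [Es, Finset.mem_filter, Finset.mem_univ, true_and, Finset.mem_insert,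
    Finset.notMem_empty, or_false, iff_false, not_and]
  rintro (rfl | rfl) (rfl | rfl) <;> simp_all; omega

theorem Es_inter {n : ℕ} (i j : Fin n) (A A' : Finset (Fin n)) (p : Pairs n) :
    p ∈ Es i j (A ∩ A') ↔ p ∈ Es i j A ∧ p ∈ Es i j A' := by
  simp only [Es, Finset.mem_filter, Finset.mem_univ, true_and, Finset.mem_insert,
    Finset.mem_inter]
  tauto

/-- If `A ⊄ A'`, the edges in exactly one of the two monomials connect all the vertices
involved, so the conditional mixed moment vanishes unless all their labels agree. -/
theorem Ey_chi_mul_of_not_subset (n K : ℕ) (q lam : ℝ) (hlam : 0 < lam) (i j : Fin n) (z : Lab n K)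
    (A A' : Finset (Fin n)) (hA : i ∉ A ∧ j ∉ A) (hA' : i ∉ A' ∧ j ∉ A') (h : ¬ A ⊆ A') :
    Ey n K q lam z (fun y => chi q i j A y * chi q i j A' y) =
      if ∀ x ∈ insert i (insert j (A ∪ A')), z x = z i then
        lam ^ (Es i j A).card * lam ^ (Es i j A').card *
          ((q * (1 - q) + lam * (1 - 2 * q)) / lam ^ 2) ^ (Es i j (A ∩ A')).card
      else 0 := by
  rw [Ey_chi_mul]
  split_ifs with hz
  · have hp : ∀ (p : Pairs n), p ∈ Es i j A ∨ p ∈ Es i j A' → z p.1.1 = z p.1.2 := by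
      intro p hp
      have h1 : p.1.1 ∈ insert i (insert j (A ∪ A')) ∧ p.1.2 ∈ insert i (insert j (A ∪ A')) := by
        simp only [Es, Finset.mem_filter, Finset.mem_univ, true_and, Finset.mem_insert,
          Finset.mem_union] at hp ⊢
        tauto
      rw [hz _ h1.1, hz _ h1.2]
    have hl2 : lam ^ 2 ≠ 0 := by positivity
    have key : ∀ p : Pairs n, (if p ∈ Es i j A then
          (if p ∈ Es i j A' then
            (if z p.1.1 = z p.1.2 then q * (1 - q) + lam * (1 - 2 * q) else q * (1 - q))
          else (if z p.1.1 = z p.1.2 then lam else 0))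
        else (if p ∈ Es i j A' then (if z p.1.1 = z p.1.2 then lam else 0) else 1)) =
        (if p ∈ Es i j A then lam else 1) * (if p ∈ Es i j A' then lam else 1) *
        (if p ∈ Es i j (A ∩ A') then (q * (1 - q) + lam * (1 - 2 * q)) / lam ^ 2 else 1) := by
      intro p
      simp only [Es_inter]
      by_cases h1 : p ∈ Es i j A <;> by_cases h2 : p ∈ Es i j A'
      · simp [h1, h2, hp p (Or.inl h1)]
        field_simp
      · simp [h1, h2, hp p (Or.inl h1)]
      · simp [h1, h2, hp p (Or.inr h2)]
      · simp [h1, h2]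
    simp_rw [key, Finset.prod_mul_distrib, Finset.prod_ite_mem, Finset.univ_inter,
      Finset.prod_const]
  -- Every edge in exactly one of the two edge sets forces equality of the labels of its ends.
  · by_contra hprod
    apply hz
    rw [← ne_eq, Finset.prod_ne_zero_iff] at hprod
    have hone : ∀ p : Pairs n, ¬(p ∈ Es i j A ↔ p ∈ Es i j A') → z p.1.1 = z p.1.2 := by
      intro p hp
      have := hprod p (Finset.mem_univ _)
      by_contra hzz
      apply this
      by_cases h1 : p ∈ Es i j A <;> by_cases h2 : p ∈ Es i j A' <;> simp_all
    have gen : ∀ B B' : Finset (Fin n), i ∉ B ∧ j ∉ B → i ∉ B' ∧ j ∉ B' →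
        (∀ p : Pairs n, p ∈ Es i j B → p ∉ Es i j B' → z p.1.1 = z p.1.2) → ¬ B ⊆ B' →
        ∀ x ∈ insert i (insert j B), z x = z i := by
      intro B B' hB hB' hpp hs
      obtain ⟨a, ha, ha'⟩ := Finset.not_subset.mp hs
      have hai : a ≠ i := fun h => hB.1 (h ▸ ha)
      have haj : a ≠ j := fun h => hB.2 (h ▸ ha)
      have hx : ∀ x ∈ insert i (insert j B), z x = z a := by
        intro x hx
        rcases lt_trichotomy x a with hl | rfl | hl
        · refine hpp ⟨(x, a), hl⟩ ?_ ?_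
          · simp only [Es, Finset.mem_filter, Finset.mem_univ, true_and]
            exact ⟨hx, by simp [ha], fun h => haj h.2⟩
          · simp [Es, hai, haj, ha']
        · rfl
        · refine (hpp ⟨(a, x), hl⟩ ?_ ?_).symm
          · simp only [Es, Finset.mem_filter, Finset.mem_univ, true_and]
            exact ⟨by simp [ha], hx, fun h => hai h.1⟩
          · simp [Es, hai, haj, ha']
      intro x hx'
      rw [hx x hx', hx i (by simp)]
    have g1 := gen A A' hA hA' (fun p h1 h2 => hone p (by tauto)) h
    by_cases hs : A' ⊆ A
    · rwa [Finset.union_eq_left.mpr hs]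
    · have g2 := gen A' A hA' hA (fun p h1 h2 => hone p (by tauto)) hs
      intro x hx
      simp only [Finset.mem_insert, Finset.mem_union] at hx
      rcases hx with rfl | rfl | h | h
      · rfl
      · exact g1 _ (by simp)
      · exact g1 _ (by simp [h])
      · exact g2 _ (by simp [h])

theorem Ey_chi_sq (n K : ℕ) (q lam : ℝ) (i j : Fin n) (z : Lab n K) (A : Finset (Fin n)) :
    Ey n K q lam z (fun y => chi q i j A y * chi q i j A y) =
      ∏ p ∈ Es i j A,
        (if z p.1.1 = z p.1.2 then q * (1 - q) + lam * (1 - 2 * q) else q * (1 - q)) := by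
  rw [Ey_chi_mul]
  rw [← Finset.univ_inter (Es i j A), ← Finset.prod_ite_mem]
  refine Finset.prod_congr rfl fun p _ => ?_
  by_cases h : p ∈ Es i j A <;> simp [h]

theorem card_Es {n : ℕ} (i j : Fin n) (hij : i < j) (A : Finset (Fin n)) (hA : i ∉ A ∧ j ∉ A) :
    2 * (Es i j A).card = A.card * (A.card + 3) := by
  set R := insert i (insert j A) with hR
  have hRc : R.card = A.card + 2 := by
    rw [hR, Finset.card_insert_of_notMem, Finset.card_insert_of_notMem hA.2]
    simp [hA.1, hij.ne]
  have hoff : R.offDiag.card = R.card * R.card - R.card := Finset.offDiag_card R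
  have hsplit := Finset.card_filter_add_card_filter_not (s := R.offDiag) (fun p => p.1 < p.2)
  have hswap : (R.offDiag.filter (fun p => ¬ p.1 < p.2)).card =
      (R.offDiag.filter (fun p => p.1 < p.2)).card := by
    refine Finset.card_bij (fun p _ => (p.2, p.1)) ?_ ?_ ?_
    · rintro ⟨a, b⟩ h
      simp only [Finset.mem_filter, Finset.mem_offDiag] at h ⊢
      refine ⟨⟨h.1.2.1, h.1.1, h.1.2.2.symm⟩, ?_⟩
      exact lt_of_le_of_ne (not_lt.mp h.2) h.1.2.2.symm
    · rintro ⟨a, b⟩ _ ⟨c, d⟩ _ h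
      simp_all
    · rintro ⟨a, b⟩ h
      simp only [Finset.mem_filter, Finset.mem_offDiag] at h
      exact ⟨(b, a), by simp [h, h.2.le, h.2.ne'], rfl⟩
  have hEs : (Es i j A).card + 1 = (R.offDiag.filter (fun p => p.1 < p.2)).card := by
    have hmem : (i, j) ∈ R.offDiag.filter (fun p => p.1 < p.2) := by
      simp [hR, hij, hij.ne]
    rw [← Finset.card_erase_add_one hmem]
    congr 1
    refine Finset.card_bij (fun p _ => p.1) ?_ ?_ ?_
    · rintro ⟨⟨a, b⟩, hab⟩ h
      simp only [Es, Finset.mem_filter, Finset.mem_univ, true_and] at h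
      simp only [Finset.mem_erase, Finset.mem_filter, Finset.mem_offDiag]
      exact ⟨fun h' => h.2.2 (by simpa using h'), ⟨h.1, h.2.1, hab.ne⟩, hab⟩
    · intro a _ b _ h
      exact Subtype.ext h
    · rintro ⟨a, b⟩ h
      simp only [Finset.mem_erase, Finset.mem_filter, Finset.mem_offDiag] at h
      refine ⟨⟨(a, b), h.2.2⟩, ?_, rfl⟩
      simp only [Es, Finset.mem_filter, Finset.mem_univ, true_and]
      exact ⟨h.2.1.1, h.2.1.2.1, fun h' => h.1 (by simp [h'])⟩
  have h1 : R.card * R.card - R.card + R.card = R.card * R.card :=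
    Nat.sub_add_cancel (Nat.le_mul_self _)
  rw [hRc] at h1 hoff
  rw [hswap] at hsplit
  nlinarith

/-! ### Sums over labels and repeated labels -/

/-- Resampling the label of one vertex preserves the uniform distribution. -/
theorem sum_update (n K : ℕ) (x : Fin n) (H : Lab n K → ℝ) :
    ∑ z : Lab n K, ∑ b : Fin K, H (Function.update z x b) = K * ∑ z : Lab n K, H z := by
  have h1 : ∑ z : Lab n K, ∑ b : Fin K, H (Function.update z x b) =
      ∑ w : Lab n K × Fin K, H (Function.update w.1 x w.2) := by
    rw [Fintype.sum_prod_type]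
  have h2 : (K : ℝ) * ∑ z : Lab n K, H z = ∑ w : Lab n K × Fin K, H w.1 := by
    rw [Fintype.sum_prod_type, Finset.mul_sum]
    simp
  rw [h1, h2]
  -- swapping the new value with the old one is an involution
  refine Finset.sum_nbij' (fun w => (Function.update w.1 x w.2, w.1 x))
    (fun w => (Function.update w.1 x w.2, w.1 x)) ?_ ?_ ?_ ?_ ?_ <;> simp

/-- If `F` ignores the label of `x`, then `G` may be averaged over that label first. -/
theorem sum_mul_le_of_update (n K : ℕ) (x : Fin n) (F G : Lab n K → ℝ) (C : ℝ)
    (hF0 : ∀ z, 0 ≤ F z) (hF : ∀ z b, F (Function.update z x b) = F z)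
    (hG : ∀ z, F z ≠ 0 → ∑ b : Fin K, G (Function.update z x b) ≤ C) :
    K * ∑ z : Lab n K, F z * G z ≤ C * ∑ z : Lab n K, F z := by
  rw [← sum_update n K x, Finset.mul_sum]
  refine Finset.sum_le_sum fun z _ => ?_
  simp_rw [hF]
  rw [← Finset.mul_sum, mul_comm C]
  by_cases h : F z = 0
  · simp [h]
  · exact mul_le_mul_of_nonneg_left (hG z h) (hF0 z)

theorem sum_const_on (n K : ℕ) (i : Fin n) (C : Finset (Fin n)) (hi : i ∈ C) :
    ∑ z : Lab n K, (if ∀ x ∈ C, z x = z i then (1 : ℝ) else 0) = K * (K : ℝ) ^ (n - C.card) := by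
  have h1 : ∀ z : Lab n K, (if ∀ x ∈ C, z x = z i then (1 : ℝ) else 0) =
      ∑ k : Fin K, if ∀ x ∈ C, z x = k then (1 : ℝ) else 0 := by
    intro z
    rw [Finset.sum_eq_single (z i)]
    · intro b _ hb
      rw [if_neg]
      intro h
      exact hb (h i hi).symm
    · simp
  simp_rw [h1]
  rw [Finset.sum_comm]
  have h2 : ∀ k : Fin K, ∑ z : Lab n K, (if ∀ x ∈ C, z x = k then (1 : ℝ) else 0) =
      (K : ℝ) ^ (n - C.card) := by
    intro k
    rw [Finset.sum_boole]
    have : (Finset.univ.filter fun z : Lab n K => ∀ x ∈ C, z x = k) =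
        Fintype.piFinset (fun x => if x ∈ C then {k} else Finset.univ) := by
      ext z
      simp only [Finset.mem_filter, Finset.mem_univ, true_and, Fintype.mem_piFinset]
      refine forall_congr' fun x => ?_
      by_cases hx : x ∈ C <;> simp [hx]
    rw [this, Fintype.card_piFinset]
    have h3 : ∀ x : Fin n, (if x ∈ C then {k} else (Finset.univ : Finset (Fin K))).card =
        if x ∈ Cᶜ then K else 1 := by
      intro x
      by_cases hx : x ∈ C <;> simp [hx]
    simp_rw [h3]
    rw [Finset.prod_ite_mem, Finset.univ_inter, Finset.prod_const, Finset.card_compl,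
      Fintype.card_fin]
    push_cast
    rfl
  simp [h2]

/-- The number of elements of `A` that, when `A` is revealed one vertex at a time after `i, j`,
get a label already present. -/
def rep {n K : ℕ} (z : Lab n K) (i j : Fin n) (A : Finset (Fin n)) : ℕ :=
  A.card + (Finset.image z {i, j}).card - (Finset.image z (insert i (insert j A))).card

theorem card_image_le_rep {n K : ℕ} (z : Lab n K) (i j : Fin n) (A : Finset (Fin n)) :
    (Finset.image z (insert i (insert j A))).card ≤ A.card + (Finset.image z {i, j}).card := by
  have : insert i (insert j A) = A ∪ {i, j} := by
    ext x; simp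
  rw [this, Finset.image_union]
  exact (Finset.card_union_le _ _).trans (Nat.add_le_add_right Finset.card_image_le _)

theorem rep_le {n K : ℕ} (z : Lab n K) (i j : Fin n) (A : Finset (Fin n)) :
    rep z i j A ≤ A.card := by
  have : (Finset.image z {i, j}).card ≤ (Finset.image z (insert i (insert j A))).card := by
    refine Finset.card_le_card (Finset.image_subset_image ?_)
    intro x; simp; tauto
  unfold rep; omega

theorem rep_empty {n K : ℕ} (z : Lab n K) (i j : Fin n) : rep z i j ∅ = 0 := by
  simp [rep]

theorem rep_insert {n K : ℕ} (z : Lab n K) (i j x : Fin n) (A : Finset (Fin n)) (hx : x ∉ A) :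
    rep z i j (insert x A) =
      rep z i j A + if z x ∈ Finset.image z (insert i (insert j A)) then 1 else 0 := by
  have h := card_image_le_rep z i j A
  have e : insert i (insert j (insert x A)) = insert x (insert i (insert j A)) := by
    ext y; simp only [Finset.mem_insert]; tauto
  unfold rep
  rw [e, Finset.image_insert (a := x) (s := insert i (insert j A)), Finset.card_insert_of_notMem hx]
  split_ifs with hm
  · rw [Finset.insert_eq_of_mem hm]; omega
  · rw [Finset.card_insert_of_notMem hm]; omega

/-- A label class has at most `rep + 2` elements: all but its first element are repetitions, except
that a repetition between `i` and `j` is not counted. -/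
theorem card_label_le {n K : ℕ} (z : Lab n K) (i j : Fin n) (A : Finset (Fin n)) (c : Fin K) :
    ((insert i (insert j A)).filter fun l => z l = c).card ≤ rep z i j A + 2 := by
  induction A using Finset.induction_on with
  | empty => exact (Finset.card_filter_le _ _).trans (by rw [rep_empty]; exact Finset.card_le_two)
  | insert x A hx ih =>
    have e : insert i (insert j (insert x A)) = insert x (insert i (insert j A)) := by
      ext y; simp only [Finset.mem_insert]; tauto
    rw [e, rep_insert z i j x A hx, Finset.filter_insert]
    split_ifs with h1 h2 h2
    · exact (Finset.card_insert_le _ _).trans (by omega)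
    · have : ((insert i (insert j A)).filter fun l => z l = c) = ∅ := by
        rw [Finset.filter_eq_empty_iff]
        intro l hl hlc
        exact h2 (Finset.mem_image.mpr ⟨l, hl, by rw [hlc, h1]⟩)
      rw [this]; simp
    · omega
    · omega

/-- The number of monochromatic edges is at most `(m + 1) / 2` per repeated vertex, `m = |A| + 2`:
a repeated vertex added to `A` creates at most `|A| + 2` and at most `rep z i j A + 2`
monochromatic edges. -/
theorem two_mul_mono_le {n K : ℕ} (z : Lab n K) (i j : Fin n) (hij : i < j) (A : Finset (Fin n))
    (hA : i ∉ A ∧ j ∉ A) :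
    2 * ((Es i j A).filter fun p => z p.1.1 = z p.1.2).card ≤ (A.card + 3) * rep z i j A := by
  induction A using Finset.induction_on with
  | empty => simp [Es_empty i j hij]
  | insert x A hx ih =>
    have hA' : i ∉ A ∧ j ∉ A :=
      ⟨fun h => hA.1 (Finset.mem_insert_of_mem h), fun h => hA.2 (Finset.mem_insert_of_mem h)⟩
    have hxi : x ≠ i := fun h => hA.1 (by simp [h])
    have hxj : x ≠ j := fun h => hA.2 (by simp [h])
    have ih := ih hA'
    have hb1 := card_label_le z i j A (z x)
    have hb2 : ((insert i (insert j A)).filter fun l => z l = z x).card ≤ A.card + 2 :=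
      (Finset.card_filter_le _ _).trans ((Finset.card_insert_le _ _).trans
        (Nat.succ_le_succ (Finset.card_insert_le _ _)))
    have hstep : ((Es i j (insert x A)).filter fun p => z p.1.1 = z p.1.2).card ≤
        ((Es i j A).filter fun p => z p.1.1 = z p.1.2).card +
        ((insert i (insert j A)).filter fun l => z l = z x).card := by
      rw [← Finset.card_filter_add_card_filter_not
        (s := (Es i j (insert x A)).filter fun p => z p.1.1 = z p.1.2)
        (fun p => p.1.1 ≠ x ∧ p.1.2 ≠ x)]
      have hmem : ∀ y, y ≠ x → y ∈ insert i (insert j (insert x A)) →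
          y ∈ insert i (insert j A) := by
        intro y hy
        simp only [Finset.mem_insert]
        tauto
      refine Nat.add_le_add ?_ ?_
      · refine Finset.card_le_card ?_
        intro p
        simp only [Es, Finset.mem_filter, Finset.mem_univ, true_and]
        rintro ⟨⟨⟨h1, h2, h3⟩, h4⟩, h5, h6⟩
        exact ⟨⟨hmem _ h5 h1, hmem _ h6 h2, h3⟩, h4⟩
      · refine Finset.card_le_card_of_injOn
          (fun p => if p.1.1 = x then p.1.2 else p.1.1) ?_ ?_
        · rintro ⟨⟨a, b⟩, hab⟩ hp
          simp only [Es, Finset.coe_filter, Finset.mem_filter, Finset.mem_univ, true_and,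
            Set.mem_ofPred_eq] at hp ⊢
          obtain ⟨⟨⟨h1, h2, h3⟩, h4⟩, h5⟩ := hp
          by_cases h : a = x
          · subst h
            simp only [if_true]
            exact ⟨hmem _ hab.ne' h2, h4.symm⟩
          · have hb : b = x := by
              by_contra hb
              exact h5 ⟨h, hb⟩
            subst hb
            simp only [h, if_false]
            exact ⟨hmem _ h h1, h4⟩
        · rintro ⟨⟨a, b⟩, hab⟩ hp ⟨⟨c, d⟩, hcd⟩ hp' heq
          simp only [Finset.coe_filter, Finset.mem_filter, Set.mem_ofPred_eq] at hp hp' heq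
          simp only [Subtype.mk.injEq, Prod.mk.injEq]
          have hp := hp.2
          have hp' := hp'.2
          split_ifs at heq <;> first | omega | (simp only at hab hcd; grind)
    rw [rep_insert z i j x A hx, Finset.card_insert_of_notMem hx]
    split_ifs with hm
    · nlinarith
    · have h0 : ((insert i (insert j A)).filter fun l => z l = z x).card = 0 := by
        rw [Finset.card_eq_zero, Finset.filter_eq_empty_iff]
        intro l hl hlc
        exact hm (Finset.mem_image.mpr ⟨l, hl, hlc⟩)
      nlinarith

/-- Conditional second moment of the monomial of `A`: by `two_mul_mono_le` each repeated vertex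
costs at most `s ^ (N + 3)`, each other vertex `r ^ (N + 3)`. -/
theorem prod_mono_le {n K N : ℕ} (z : Lab n K) (i j : Fin n) (hij : i < j) (A : Finset (Fin n))
    (hA : i ∉ A ∧ j ∉ A) (hN : A.card = N) (r s pb qb : ℝ) (hr : 0 ≤ r) (hrs : r ≤ s)
    (hp0 : 0 ≤ pb) (hp : pb ≤ s ^ 2) (hq : qb = r ^ 2) :
    ∏ p ∈ Es i j A, (if z p.1.1 = z p.1.2 then pb else qb) ≤
      (r ^ (N + 3)) ^ (A.card - rep z i j A) * (s ^ (N + 3)) ^ rep z i j A := by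
  have hs : 0 ≤ s := hr.trans hrs
  have hE := card_Es i j hij A hA
  have he := two_mul_mono_le z i j hij A hA
  have hle := rep_le z i j A
  have hsplit := Finset.card_filter_add_card_filter_not (s := Es i j A)
    (fun p => z p.1.1 = z p.1.2)
  set e := ((Es i j A).filter fun p => z p.1.1 = z p.1.2).card
  set f := ((Es i j A).filter fun p => ¬ z p.1.1 = z p.1.2).card
  set g := rep z i j A
  calc ∏ p ∈ Es i j A, (if z p.1.1 = z p.1.2 then pb else qb)
      ≤ ∏ p ∈ Es i j A, (if z p.1.1 = z p.1.2 then s ^ 2 else r ^ 2) := by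
        refine Finset.prod_le_prod ?_ ?_
        · intro p _; split_ifs
          · exact hp0
          · rw [hq]; positivity
        · intro p _; split_ifs
          · exact hp
          · rw [hq]
    _ = s ^ (2 * e) * r ^ (2 * f) := by
        rw [Finset.prod_ite, Finset.prod_const, Finset.prod_const, ← pow_mul, ← pow_mul]
    _ ≤ s ^ ((N + 3) * g) * r ^ ((N + 3) * (A.card - g)) := by
        obtain ⟨t, ht⟩ := Nat.exists_eq_add_of_le hle
        rw [hN] at he hE ht ⊢
        obtain ⟨d, hd⟩ := Nat.exists_eq_add_of_le he
        have e1 : N - g = t := by omega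
        have e2 : 2 * f = (N + 3) * t + d := by nlinarith
        rw [e1, hd, e2, pow_add, pow_add]
        have : r ^ d ≤ s ^ d := pow_le_pow_left₀ hr hrs d
        have h2 : 0 ≤ s ^ (2 * e) * r ^ ((N + 3) * t) := by positivity
        nlinarith
    _ = _ := by rw [← pow_mul, ← pow_mul, mul_comm]

/-- Revealing the vertices of `A` one at a time, each has at most `d + k` labels that repeat an
earlier one, where `k` vertices of `A` came before and `d` bounds the number of labels of
`i, j`. -/
theorem sum_rep_le {n K : ℕ} (i j : Fin n) (ev : Fin K → Fin K → ℝ) (d : ℕ)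
    (hev0 : ∀ k l, 0 ≤ ev k l)
    (hd : ∀ z : Lab n K, ev (z i) (z j) ≠ 0 → (Finset.image z {i, j}).card ≤ d)
    (a b : ℝ) (ha : 0 ≤ a) (hb : 0 ≤ b) (A : Finset (Fin n)) (hA : i ∉ A ∧ j ∉ A) :
    (K : ℝ) ^ A.card * ∑ z : Lab n K, ev (z i) (z j) *
        (a ^ (A.card - rep z i j A) * b ^ rep z i j A) ≤
      (∏ k ∈ Finset.range A.card, (K * a + (k + d : ℕ) * b)) *
        ∑ z : Lab n K, ev (z i) (z j) := by
  induction A using Finset.induction_on with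
  | empty => simp [rep_empty]
  | insert x A hx ih =>
    have hA' : i ∉ A ∧ j ∉ A :=
      ⟨fun h => hA.1 (Finset.mem_insert_of_mem h), fun h => hA.2 (Finset.mem_insert_of_mem h)⟩
    have hxi : i ≠ x := fun h => hA.1 (by simp [h])
    have hxj : j ≠ x := fun h => hA.2 (by simp [h])
    have ih := ih hA'
    have himg : ∀ (z : Lab n K) (c : Fin K) (B : Finset (Fin n)), x ∉ B →
        Finset.image (Function.update z x c) B = Finset.image z B := by
      intro z c B hB
      refine Finset.image_congr ?_
      intro y hy
      have hyx : y ≠ x := fun h => hB (by rw [← h]; exact hy)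
      exact Function.update_of_ne hyx _ _
    have hxR : x ∉ insert i (insert j A) := by
      simp [hxi.symm, hxj.symm, hx]
    have hrep : ∀ (z : Lab n K) (c : Fin K),
        rep (Function.update z x c) i j A = rep z i j A := by
      intro z c
      unfold rep
      rw [himg z c _ hxR, himg z c {i, j} (by simp [hxi.symm, hxj.symm])]
    have hw : ∀ z : Lab n K, ev (z i) (z j) *
        (a ^ ((insert x A).card - rep z i j (insert x A)) * b ^ rep z i j (insert x A)) =
        (ev (z i) (z j) * (a ^ (A.card - rep z i j A) * b ^ rep z i j A)) *
        (if z x ∈ Finset.image z (insert i (insert j A)) then b else a) := by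
      intro z
      have hle := rep_le z i j A
      rw [rep_insert z i j x A hx, Finset.card_insert_of_notMem hx]
      split_ifs
      · rw [Nat.add_sub_add_right, pow_succ]; ring
      · have e : A.card + 1 - (rep z i j A + 0) = A.card - rep z i j A + 1 := by omega
        rw [e, Nat.add_zero, pow_succ]; ring
    simp_rw [hw]
    have key := sum_mul_le_of_update n K x
      (fun z => ev (z i) (z j) * (a ^ (A.card - rep z i j A) * b ^ rep z i j A))
      (fun z => if z x ∈ Finset.image z (insert i (insert j A)) then b else a)
      (K * a + (A.card + d : ℕ) * b) ?_ ?_ ?_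
    · rw [Finset.card_insert_of_notMem hx, Finset.prod_range_succ, pow_succ, mul_assoc]
      calc _ ≤ (K : ℝ) ^ A.card * _ := mul_le_mul_of_nonneg_left key (by positivity)
        _ = (K * a + (A.card + d : ℕ) * b) * ((K : ℝ) ^ A.card * ∑ z : Lab n K, ev (z i) (z j) *
        (a ^ (A.card - rep z i j A) * b ^ rep z i j A)) := by ring
        _ ≤ (K * a + (A.card + d : ℕ) * b) * _ := mul_le_mul_of_nonneg_left ih (by positivity)
        _ = _ := by ring
    · intro z
      have := hev0 (z i) (z j)
      positivity
    · intro z c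
      simp only [hrep, Function.update_of_ne hxi, Function.update_of_ne hxj]
    · intro z hz
      have hz' : ev (z i) (z j) ≠ 0 := left_ne_zero_of_mul hz
      have hcard := (card_image_le_rep z i j A).trans (Nat.add_le_add_left (hd z hz') _)
      simp only [himg z _ _ hxR, Function.update_self]
      calc ∑ c : Fin K, (if c ∈ Finset.image z (insert i (insert j A)) then b else a)
          ≤ ∑ c : Fin K, (a + if c ∈ Finset.image z (insert i (insert j A)) then b else 0) := by
            refine Finset.sum_le_sum fun c _ => ?_
            split_ifs <;> linarith
        _ = K * a + ((Finset.image z (insert i (insert j A))).card : ℝ) * b := by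
            rw [Finset.sum_add_distrib, Finset.sum_ite_mem, Finset.univ_inter]
            simp
        _ ≤ _ := by
            gcongr

/-! ### Mixed moments -/

/-- The indicator that two labels agree. -/
def evEq {K : ℕ} (k l : Fin K) : ℝ := if k = l then 1 else 0

/-- The indicator that two labels differ. -/
def evNe {K : ℕ} (k l : Fin K) : ℝ := if k ≠ l then 1 else 0

theorem sum_evEq (n K : ℕ) (i j : Fin n) (hij : i < j) :
    ∑ z : Lab n K, evEq (z i) (z j) = K * (K : ℝ) ^ (n - 2) := by
  have h := sum_const_on n K i {i, j} (by simp)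
  rw [Finset.card_pair hij.ne] at h
  rw [← h]
  refine Finset.sum_congr rfl fun z _ => ?_
  simp only [evEq, Finset.mem_insert, Finset.mem_singleton, forall_eq_or_imp, forall_eq, true_and,
    eq_comm (a := z i)]

theorem sum_evNe_pos (n K : ℕ) (hK : 2 ≤ K) (i j : Fin n) (hij : i < j) :
    0 < ∑ z : Lab n K, evNe (z i) (z j) := by
  refine Finset.sum_pos' (fun z _ => ?_) ⟨fun x => if x = i then ⟨0, by omega⟩ else ⟨1, by omega⟩,
    Finset.mem_univ _, ?_⟩
  · unfold evNe; split_ifs <;> norm_num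
  · simp [evNe, hij.ne']

theorem expec_ev (n K : ℕ) (q lam : ℝ) (i j : Fin n) (P : Fin K → Fin K → Prop)
    [∀ k l, Decidable (P k l)] (F : EdgeConf n → ℝ) :
    expec n K q lam (fun z y => if P (z i) (z j) then F y else 0) =
      ((K : ℝ)⁻¹) ^ n * ∑ z : Lab n K, (if P (z i) (z j) then 1 else 0) * Ey n K q lam z F := by
  unfold expec Ey wt
  rw [Finset.mul_sum]
  refine Finset.sum_congr rfl fun z _ => ?_
  by_cases h : P (z i) (z j)
  · simp only [h, if_true]
    rw [one_mul, Finset.mul_sum]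
    refine Finset.sum_congr rfl fun y _ => ?_
    ring
  · simp [h]

theorem expecEq_eq (n K : ℕ) (hK : K ≠ 0) (q lam : ℝ) (i j : Fin n) (F : EdgeConf n → ℝ) :
    expecEq n K q lam i j (fun _ y => F y) =
      (∑ z : Lab n K, evEq (z i) (z j) * Ey n K q lam z F) /
        ∑ z : Lab n K, evEq (z i) (z j) := by
  have hKn : ((K : ℝ)⁻¹) ^ n ≠ 0 := by positivity
  unfold expecEq
  have h1 := expec_ev n K q lam i j (fun k l => k = l) F
  have h2 := expec_ev n K q lam i j (fun k l => k = l) (fun _ => 1)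
  simp only [Ey_one, mul_one] at h2
  simp only [h1, h2, evEq]
  exact mul_div_mul_left _ _ hKn

theorem expecNe_eq (n K : ℕ) (hK : K ≠ 0) (q lam : ℝ) (i j : Fin n) (F : EdgeConf n → ℝ) :
    expecNe n K q lam i j (fun _ y => F y) =
      (∑ z : Lab n K, evNe (z i) (z j) * Ey n K q lam z F) /
        ∑ z : Lab n K, evNe (z i) (z j) := by
  have hKn : ((K : ℝ)⁻¹) ^ n ≠ 0 := by positivity
  unfold expecNe
  have h1 := expec_ev n K q lam i j (fun k l => k ≠ l) F
  have h2 := expec_ev n K q lam i j (fun k l => k ≠ l) (fun _ => 1)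
  simp only [Ey_one, mul_one] at h2
  simp only [h1, h2, evNe]
  exact mul_div_mul_left _ _ hKn

/-- The mixed moment of the monomials of `A` and `A'`, conditionally on the event on the labels of
`i` and `j` with indicator `ev`. -/
def J (n K : ℕ) (q lam : ℝ) (i j : Fin n) (ev : Fin K → Fin K → ℝ) (A A' : Finset (Fin n)) : ℝ :=
  (∑ z : Lab n K, ev (z i) (z j) *
    Ey n K q lam z (fun y => chi q i j A y * chi q i j A' y)) / ∑ z : Lab n K, ev (z i) (z j)

theorem chi_empty {n : ℕ} (q : ℝ) (i j : Fin n) (hij : i < j) (y : EdgeConf n) :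
    chi q i j ∅ y = 1 := by
  simp [chi, Es_empty i j hij]

theorem mean_ev (n K N : ℕ) (q lam : ℝ) (i j : Fin n) (hij : i < j) (ev : Fin K → Fin K → ℝ) :
    (∑ z : Lab n K, ev (z i) (z j) *
      Ey n K q lam z (fun y => cliqueStat n q (N + 2) (by omega) i j y)) /
        ∑ z : Lab n K, ev (z i) (z j) =
      N.factorial * ∑ A ∈ vsets i j N, J n K q lam i j ev A ∅ := by
  have h : ∀ z : Lab n K, Ey n K q lam z (fun y => cliqueStat n q (N + 2) (by omega) i j y) =
      N.factorial * ∑ A ∈ vsets i j N,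
        Ey n K q lam z (fun y => chi q i j A y * chi q i j ∅ y) := by
    intro z
    simp_rw [cliqueStat_eq n N q i j hij, chi_empty q i j hij, mul_one, Ey]
    rw [Finset.sum_comm, Finset.mul_sum]
    refine Finset.sum_congr rfl fun y _ => ?_
    rw [← Finset.mul_sum]
    ring
  simp_rw [h, J, ← Finset.sum_div]
  rw [Finset.sum_comm (s := vsets i j N), ← mul_div_assoc, Finset.mul_sum]
  congr 1
  refine Finset.sum_congr rfl fun z _ => ?_
  rw [← Finset.mul_sum]
  ring

theorem sq_ev (n K N : ℕ) (q lam : ℝ) (i j : Fin n) (hij : i < j) (ev : Fin K → Fin K → ℝ) :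
    (∑ z : Lab n K, ev (z i) (z j) *
      Ey n K q lam z (fun y => cliqueStat n q (N + 2) (by omega) i j y ^ 2)) /
        ∑ z : Lab n K, ev (z i) (z j) =
      (N.factorial : ℝ) ^ 2 *
        ∑ A ∈ vsets i j N, ∑ A' ∈ vsets i j N, J n K q lam i j ev A A' := by
  have h : ∀ z : Lab n K, Ey n K q lam z (fun y => cliqueStat n q (N + 2) (by omega) i j y ^ 2) =
      (N.factorial : ℝ) ^ 2 * ∑ A ∈ vsets i j N, ∑ A' ∈ vsets i j N,
        Ey n K q lam z (fun y => chi q i j A y * chi q i j A' y) := by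
    intro z
    simp_rw [cliqueStat_eq n N q i j hij, mul_pow, sq (Finset.sum _ _), Finset.sum_mul_sum, Ey]
    simp_rw [Finset.sum_comm (t := (Finset.univ : Finset (EdgeConf n)))]
    rw [Finset.mul_sum]
    refine Finset.sum_congr rfl fun y _ => ?_
    simp_rw [← Finset.mul_sum]
    ring
  simp_rw [h, J, ← Finset.sum_div]
  simp_rw [Finset.sum_comm (t := (Finset.univ : Finset (Lab n K)))]
  rw [← mul_div_assoc, Finset.mul_sum]
  congr 1
  refine Finset.sum_congr rfl fun z _ => ?_
  simp_rw [← Finset.mul_sum]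
  ring

theorem J_eq_of_not_subset (n K : ℕ) (hK : K ≠ 0) (q lam : ℝ) (hlam : 0 < lam) (i j : Fin n)
    (hij : i < j) (A A' : Finset (Fin n)) (hA : i ∉ A ∧ j ∉ A) (hA' : i ∉ A' ∧ j ∉ A')
    (h : ¬ A ⊆ A') :
    J n K q lam i j evEq A A' = lam ^ (Es i j A).card * lam ^ (Es i j A').card *
          ((q * (1 - q) + lam * (1 - 2 * q)) / lam ^ 2) ^ (Es i j (A ∩ A')).card /
            (K : ℝ) ^ (A ∪ A').card := by
  unfold J
  rw [sum_evEq n K i j hij]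
  have hK0 : (K : ℝ) ≠ 0 := by exact_mod_cast hK
  set R := insert i (insert j (A ∪ A')) with hR
  have hRc : R.card = (A ∪ A').card + 2 := by
    rw [hR, Finset.card_insert_of_notMem, Finset.card_insert_of_notMem]
    · simp [hA.2, hA'.2]
    · simp [hA.1, hA'.1, hij.ne]
  have hRn : R.card ≤ n := (Finset.card_le_univ R).trans (by simp)
  have h1 := sum_const_on n K i R (by simp [hR])
  simp_rw [Ey_chi_mul_of_not_subset n K q lam hlam i j _ A A' hA hA' h]
  set V := lam ^ (Es i j A).card * lam ^ (Es i j A').card *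
          ((q * (1 - q) + lam * (1 - 2 * q)) / lam ^ 2) ^ (Es i j (A ∩ A')).card
  have h2 : ∑ z : Lab n K, evEq (z i) (z j) * (if ∀ x ∈ R, z x = z i then V else 0) =
      V * (K * (K : ℝ) ^ (n - R.card)) := by
    rw [← h1, Finset.mul_sum]
    refine Finset.sum_congr rfl fun z _ => ?_
    by_cases hz : ∀ x ∈ R, z x = z i
    · have : z j = z i := hz j (by simp [hR])
      rw [if_pos hz, if_pos hz, evEq, if_pos this.symm, one_mul, mul_one]
    · simp [hz]
  rw [h2, div_eq_div_iff (by positivity) (by positivity)]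
  have : n - 2 = (n - R.card) + (A ∪ A').card := by omega
  rw [this, pow_add]
  ring

/-- All the labels must agree for a nonzero contribution, which `z i ≠ z j` excludes. -/
theorem J_ne_of_not_subset (n K : ℕ) (q lam : ℝ) (hlam : 0 < lam) (i j : Fin n)
    (A A' : Finset (Fin n)) (hA : i ∉ A ∧ j ∉ A) (hA' : i ∉ A' ∧ j ∉ A')
    (h : ¬ A ⊆ A') :
    J n K q lam i j evNe A A' = 0 := by
  unfold J
  rw [Finset.sum_eq_zero, zero_div]
  intro z _
  rw [Ey_chi_mul_of_not_subset n K q lam hlam i j _ A A' hA hA' h]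
  split_ifs with hz
  · have : z j = z i := hz j (by simp)
    simp [evNe, this]
  · simp

/-- The bound on the diagonal terms `A = A'`; `r ^ 2 = q̄` and `s ^ 2 ≥ p̄`. -/
theorem J_diag_le (n K N : ℕ) (hK : K ≠ 0) (q lam : ℝ) (i j : Fin n) (hij : i < j)
    (ev : Fin K → Fin K → ℝ) (d : ℕ) (hev0 : ∀ k l, 0 ≤ ev k l)
    (hd : ∀ z : Lab n K, ev (z i) (z j) ≠ 0 → (Finset.image z {i, j}).card ≤ d)
    (hpos : 0 < ∑ z : Lab n K, ev (z i) (z j))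
    (A : Finset (Fin n)) (hA : i ∉ A ∧ j ∉ A) (hN : A.card = N)
    (r s : ℝ) (hr : 0 ≤ r) (hrs : r ≤ s)
    (hp0 : 0 ≤ q * (1 - q) + lam * (1 - 2 * q)) (hp : q * (1 - q) + lam * (1 - 2 * q) ≤ s ^ 2)
    (hq : q * (1 - q) = r ^ 2) :
    J n K q lam i j ev A A ≤
      (∏ k ∈ Finset.range N, (K * r ^ (N + 3) + (k + d : ℕ) * s ^ (N + 3))) / (K : ℝ) ^ N := by
  have hK0 : (K : ℝ) ≠ 0 := by exact_mod_cast hK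
  have hs : 0 ≤ s := hr.trans hrs
  unfold J
  rw [div_le_div_iff₀ hpos (by positivity)]
  have h1 := sum_rep_le i j ev d hev0 hd (r ^ (N + 3)) (s ^ (N + 3)) (by positivity)
    (by positivity) A hA
  rw [hN] at h1
  refine le_trans ?_ h1
  rw [mul_comm]
  refine mul_le_mul_of_nonneg_left ?_ (by positivity)
  refine Finset.sum_le_sum fun z _ => ?_
  refine mul_le_mul_of_nonneg_left ?_ (hev0 _ _)
  rw [Ey_chi_sq]
  have := prod_mono_le (N := N) z i j hij A hA hN r s _ _ hr hrs hp0 hp hq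
  rwa [hN] at this

/-! ### Counting overlaps and two elementary products -/

/-- A uniformly random `N`-subset of a `u`-set contains `s` given points with probability at most
`(N / u) ^ s`. -/
theorem choose_sub_mul_pow_le (u N s : ℕ) (hN : N ≤ u) (hs : s ≤ N) :
    (u - s).choose (N - s) * u ^ s ≤ u.choose N * N ^ s := by
  induction s with
  | zero => simp
  | succ s ih =>
    have ih := ih (by omega)
    obtain ⟨N', hN'⟩ : ∃ N', N = N' + s + 1 := ⟨N - s - 1, by omega⟩
    obtain ⟨u', hu'⟩ : ∃ u', u = u' + s + 1 := ⟨u - s - 1, by omega⟩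
    have e1 : u - (s + 1) = u' := by omega
    have e2 : N - (s + 1) = N' := by omega
    have e3 : u - s = u' + 1 := by omega
    have e4 : N - s = N' + 1 := by omega
    rw [e3, e4] at ih
    rw [e1, e2]
    have hc := Nat.add_one_mul_choose_eq u' N'
    have hle : (N' + 1) * u ≤ (u' + 1) * N := by
      rw [hN', hu'] at hN ⊢
      have : N' ≤ u' := by omega
      nlinarith
    refine Nat.le_of_mul_le_mul_left ?_ (Nat.succ_pos u')
    calc (u' + 1) * (u'.choose N' * u ^ (s + 1))
        = ((u' + 1) * u'.choose N') * u ^ s * u := by ring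
      _ = ((u' + 1).choose (N' + 1) * u ^ s) * ((N' + 1) * u) := by rw [hc]; ring
      _ ≤ (u.choose N * N ^ s) * ((u' + 1) * N) := Nat.mul_le_mul ih hle
      _ = (u' + 1) * (u.choose N * N ^ (s + 1)) := by ring

theorem card_vsets {n : ℕ} (i j : Fin n) (hij : i < j) (N : ℕ) :
    (vsets i j N).card = (n - 2).choose N := by
  rw [vsets, Finset.card_powersetCard, Finset.card_sdiff_of_subset (Finset.subset_univ _),
    Finset.card_pair hij.ne]
  simp

theorem notMem_of_mem_vsets {n : ℕ} {i j : Fin n} {N : ℕ} {A : Finset (Fin n)}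
    (hA : A ∈ vsets i j N) : i ∉ A ∧ j ∉ A := by
  have hsub := (Finset.mem_powersetCard.mp hA).1
  exact ⟨fun h => by simpa using hsub h, fun h => by simpa using hsub h⟩

/-- Choose the intersection with `A`, then the rest of `A'`. -/
theorem card_inter_eq_le {n : ℕ} (i j : Fin n) (hij : i < j) (N s : ℕ)
    (A : Finset (Fin n)) (hA : A ∈ vsets i j N) :
    ((vsets i j N).filter fun A' => (A ∩ A').card = s).card ≤
      N.choose s * (n - 2 - s).choose (N - s) := by
  obtain ⟨hsub, hcard⟩ := Finset.mem_powersetCard.mp hA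
  have h1 : ((vsets i j N).filter fun A' => (A ∩ A').card = s) ⊆
      (Finset.powersetCard s A).biUnion fun C => (vsets i j N).filter fun A' => C ⊆ A' := by
    intro A' hA'
    rw [Finset.mem_filter] at hA'
    rw [Finset.mem_biUnion]
    exact ⟨A ∩ A', Finset.mem_powersetCard.mpr ⟨Finset.inter_subset_left, hA'.2⟩,
      Finset.mem_filter.mpr ⟨hA'.1, Finset.inter_subset_right⟩⟩
  refine (Finset.card_le_card h1).trans ?_
  have h2 : (Finset.powersetCard s A).card = N.choose s := by
    rw [Finset.card_powersetCard, hcard]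
  rw [← h2]
  refine Finset.card_biUnion_le_card_mul _ _ _ ?_
  intro C hC
  obtain ⟨hCA, hCs⟩ := Finset.mem_powersetCard.mp hC
  have hu : ((Finset.univ : Finset (Fin n)) \ {i, j}).card = n - 2 := by
    rw [Finset.card_sdiff_of_subset (Finset.subset_univ _), Finset.card_pair hij.ne]
    simp
  have h3 : (Finset.powersetCard (N - s) ((Finset.univ \ {i, j}) \ C)).card =
      (n - 2 - s).choose (N - s) := by
    rw [Finset.card_powersetCard, Finset.card_sdiff_of_subset (hCA.trans hsub), hCs, hu]
  rw [← h3]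
  refine Finset.card_le_card_of_injOn (fun A' => A' \ C) ?_ ?_
  · intro A' hA'
    rw [Finset.mem_coe, Finset.mem_filter] at hA'
    obtain ⟨h4, h5⟩ := Finset.mem_powersetCard.mp hA'.1
    rw [Finset.mem_coe, Finset.mem_powersetCard]
    exact ⟨Finset.sdiff_subset_sdiff h4 le_rfl, by
      rw [Finset.card_sdiff_of_subset hA'.2, h5, hCs]⟩
  · intro A' hA' B hB h
    rw [Finset.mem_coe, Finset.mem_filter] at hA' hB
    simp only at h
    rw [← Finset.sdiff_union_of_subset hA'.2, h, Finset.sdiff_union_of_subset hB.2]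

/-- The overlap `|A ∩ A'|` is hypergeometric, and bounded as if it were binomial with success
probability `N / (n - 2)`. -/
theorem sum_overlap_le {n : ℕ} (i j : Fin n) (hij : i < j) (N : ℕ) (hn : 2 < n) (hN : N ≤ n - 2)
    (T : ℕ → ℝ) (hT : ∀ s, 0 ≤ T s) (A : Finset (Fin n)) (hA : A ∈ vsets i j N) :
    ∑ A' ∈ (vsets i j N).erase A, T (A ∩ A').card ≤
      (vsets i j N).card * ∑ s ∈ Finset.range N,
        (N.choose s : ℝ) * ((N : ℝ) / ((n : ℝ) - 2)) ^ s * T s := by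
  have hcast : ((n - 2 : ℕ) : ℝ) = (n : ℝ) - 2 := by
    rw [Nat.cast_sub hn.le]; norm_num
  have hpos : (0 : ℝ) < (n : ℝ) - 2 := by
    rw [← hcast]; exact_mod_cast Nat.sub_pos_of_lt hn
  have hcA := (Finset.mem_powersetCard.mp hA).2
  rw [← Finset.sum_fiberwise_of_maps_to (t := Finset.range N) (g := fun A' => (A ∩ A').card)]
  · rw [Finset.mul_sum]
    refine Finset.sum_le_sum fun s hs => ?_
    have hsN : s ≤ N := (Finset.mem_range.mp hs).le
    have h1 : ∑ A' ∈ ((vsets i j N).erase A).filter (fun A' => (A ∩ A').card = s),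
        T (A ∩ A').card =
        ((((vsets i j N).erase A).filter (fun A' => (A ∩ A').card = s)).card : ℝ) * T s := by
      rw [← nsmul_eq_mul]
      refine Finset.sum_eq_card_nsmul fun A' hA' => ?_
      rw [(Finset.mem_filter.mp hA').2]
    rw [h1, ← mul_assoc]
    refine mul_le_mul_of_nonneg_right ?_ (hT s)
    have h2 : (((vsets i j N).erase A).filter (fun A' => (A ∩ A').card = s)).card ≤
        N.choose s * (n - 2 - s).choose (N - s) :=
      (Finset.card_le_card (Finset.filter_subset_filter _ (Finset.erase_subset _ _))).trans
        (card_inter_eq_le i j hij N s A hA)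
    have h3 := choose_sub_mul_pow_le (n - 2) N s hN hsN
    have h2' : ((((vsets i j N).erase A).filter (fun A' => (A ∩ A').card = s)).card : ℝ) ≤
        N.choose s * ((n - 2 - s).choose (N - s) : ℝ) := by exact_mod_cast h2
    have h3' : ((n - 2 - s).choose (N - s) : ℝ) * ((n : ℝ) - 2) ^ s ≤
        ((vsets i j N).card : ℝ) * (N : ℝ) ^ s := by
      rw [card_vsets i j hij, ← hcast]; exact_mod_cast h3
    have h4 : ((n - 2 - s).choose (N - s) : ℝ) ≤
        ((vsets i j N).card : ℝ) * ((N : ℝ) / ((n : ℝ) - 2)) ^ s := by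
      rw [div_pow, ← mul_div_assoc, le_div_iff₀ (by positivity)]
      exact h3'
    calc _ ≤ N.choose s * ((n - 2 - s).choose (N - s) : ℝ) := h2'
      _ ≤ N.choose s * (((vsets i j N).card : ℝ) * ((N : ℝ) / ((n : ℝ) - 2)) ^ s) := by gcongr
      _ = _ := by ring
  · intro A' hA'
    obtain ⟨hne, hA'⟩ := Finset.mem_erase.mp hA'
    have hcA' := (Finset.mem_powersetCard.mp hA').2
    rw [Finset.mem_range, ← hcA]
    refine Finset.card_lt_card (Finset.ssubset_iff_subset_ne.mpr ⟨Finset.inter_subset_left, ?_⟩)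
    intro h
    exact hne (Finset.eq_of_subset_of_card_le (Finset.inter_eq_left.mp h) (by rw [hcA, hcA'])).symm

theorem one_le_card_vsets_mul {n : ℕ} (i j : Fin n) (hij : i < j) (N : ℕ) (hn : 2 < n)
    (hN : N ≤ n - 2) :
    1 ≤ ((vsets i j N).card : ℝ) * ((N : ℝ) / ((n : ℝ) - 2)) ^ N := by
  have hcast : ((n - 2 : ℕ) : ℝ) = (n : ℝ) - 2 := by
    rw [Nat.cast_sub hn.le]; norm_num
  have hpos : (0 : ℝ) < (n : ℝ) - 2 := by
    rw [← hcast]; exact_mod_cast Nat.sub_pos_of_lt hn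
  have h3 := choose_sub_mul_pow_le (n - 2) N N hN le_rfl
  rw [Nat.sub_self, Nat.choose_zero_right, one_mul] at h3
  rw [card_vsets i j hij, div_pow, ← mul_div_assoc, le_div_iff₀ (by positivity), one_mul, ← hcast]
  exact_mod_cast h3

/-- `∏_{k=1}^N (1 + k/N) ≤ 2^N`. -/
theorem prod_one_le (N : ℕ) (hN : 1 ≤ N) :
    ∏ k ∈ Finset.range N, (1 + ((k + 1 : ℕ) : ℝ) / N) ≤ 2 ^ N := by
  have hN0 : (0 : ℝ) < N := by exact_mod_cast hN
  calc ∏ k ∈ Finset.range N, (1 + ((k + 1 : ℕ) : ℝ) / N) ≤ ∏ k ∈ Finset.range N, (2 : ℝ) := by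
        refine Finset.prod_le_prod (fun k _ => by positivity) fun k hk => ?_
        have h : ((k + 1 : ℕ) : ℝ) ≤ N := by exact_mod_cast Finset.mem_range.mp hk
        have : ((k + 1 : ℕ) : ℝ) / N ≤ 1 := (div_le_one hN0).mpr h
        linarith
    _ = 2 ^ N := by simp

/-- `∏_{k=2}^{N+1} (1 + k/N) ≤ 2^N + 1`: for `N ≥ 3` the arithmetic mean of the factors is at most
`2`, and pairing opposite factors suffices; `N = 1, 2` give equality. -/
theorem prod_two_le (N : ℕ) (hN : 1 ≤ N) :
    ∏ k ∈ Finset.range N, (1 + ((k + 2 : ℕ) : ℝ) / N) ≤ 2 ^ N + 1 := by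
  rcases (by omega : N = 1 ∨ N = 2 ∨ 3 ≤ N) with rfl | rfl | h3
  · norm_num
  · norm_num [Finset.prod_range_succ]
  have hN0 : (3 : ℝ) ≤ N := by exact_mod_cast h3
  set f : ℕ → ℝ := fun k => 1 + ((k + 2 : ℕ) : ℝ) / N with hf
  have hf0 : ∀ k, 0 ≤ f k := fun k => by rw [hf]; positivity
  have hsq : (∏ k ∈ Finset.range N, f k) * (∏ k ∈ Finset.range N, f k) ≤ 2 ^ N * 2 ^ N := by
    conv_lhs => enter [1]; rw [← Finset.prod_range_reflect f N]
    rw [← Finset.prod_mul_distrib, ← mul_pow]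
    calc ∏ k ∈ Finset.range N, f (N - 1 - k) * f k ≤ ∏ k ∈ Finset.range N, (2 * 2 : ℝ) := by
          refine Finset.prod_le_prod (fun k _ => mul_nonneg (hf0 _) (hf0 _)) fun k hk => ?_
          have hk' := Finset.mem_range.mp hk
          have hs : f (N - 1 - k) + f k ≤ 4 := by
            simp only [hf]
            have : ((N - 1 - k + 2 : ℕ) : ℝ) = N + 1 - k := by
              have : N - 1 - k + 2 + k = N + 1 := by omega
              have : ((N - 1 - k + 2 : ℕ) : ℝ) + k = N + 1 := by exact_mod_cast this
              linarith
            rw [this]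
            push_cast
            have : (1 + ((N : ℝ) + 1 - k) / N + (1 + (k + 2) / N)) = 3 + 3 / N := by
              field_simp; ring
            rw [this]
            have : 3 / (N : ℝ) ≤ 1 := by rw [div_le_one (by linarith)]; exact hN0
            linarith
          nlinarith [hf0 (N - 1 - k), hf0 k, sq_nonneg (f (N - 1 - k) - f k)]
      _ = (2 * 2) ^ N := by simp
  have h0 : 0 ≤ ∏ k ∈ Finset.range N, f k := Finset.prod_nonneg fun k _ => hf0 k
  have := abs_le_of_sq_le_sq' (by simpa [sq] using hsq) (by positivity : (0 : ℝ) ≤ 2 ^ N)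
  linarith [this.2]

/-! ### Bounds relative to the squared mean -/

/-- Factor by factor, the two conditions on `n` turn `K r^{m+1} + (k + d) s^{m+1}` into
`(1 + (k + d) / N) / ρ`. -/
theorem diag_num (N K d : ℕ) (hN : 1 ≤ N) (hK : 1 ≤ K) (lam ρ θ r s : ℝ) (hlam : 0 < lam)
    (hρ : 0 < ρ) (hθ : 0 ≤ θ) (hr : 0 ≤ r) (hs : 0 ≤ s)
    (H1 : θ * K * (s / lam) ^ (N + 3) ≤ 1 / (ρ * N))
    (H2 : θ * (K : ℝ) ^ 2 * (r / lam) ^ (N + 3) ≤ 1 / ρ) :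
    θ ^ N * ((∏ k ∈ Finset.range N, (K * r ^ (N + 3) + (k + d : ℕ) * s ^ (N + 3))) / (K : ℝ) ^ N) *
      ((K : ℝ) ^ (2 * N) / lam ^ (N * (N + 3))) ≤
      (1 / ρ) ^ N * ∏ k ∈ Finset.range N, (1 + ((k + d : ℕ) : ℝ) / N) := by
  have hK0 : (0 : ℝ) < K := by exact_mod_cast hK
  have hN0 : (0 : ℝ) < N := by exact_mod_cast hN
  have hl : 0 < lam ^ (N + 3) := by positivity
  have e1 : θ ^ N * ((∏ k ∈ Finset.range N, (K * r ^ (N + 3) + (k + d : ℕ) * s ^ (N + 3))) /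
      (K : ℝ) ^ N) * ((K : ℝ) ^ (2 * N) / lam ^ (N * (N + 3))) =
      ∏ k ∈ Finset.range N, (θ * (K : ℝ) ^ 2 * (r / lam) ^ (N + 3) +
        (k + d : ℕ) * (θ * K * (s / lam) ^ (N + 3))) := by
    have : ∀ k : ℕ, (θ * (K : ℝ) ^ 2 * (r / lam) ^ (N + 3) +
        (k + d : ℕ) * (θ * K * (s / lam) ^ (N + 3))) =
        (θ * K / lam ^ (N + 3)) * (K * r ^ (N + 3) + (k + d : ℕ) * s ^ (N + 3)) := by
      intro k
      rw [div_pow, div_pow]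
      field_simp
    simp_rw [this]
    rw [Finset.prod_mul_distrib, Finset.prod_const, Finset.card_range, div_pow, mul_pow,
      ← pow_mul lam, mul_comm (N + 3) N, mul_comm 2 N, pow_mul (K : ℝ) N 2]
    generalize (∏ k ∈ Finset.range N, (K * r ^ (N + 3) + (k + d : ℕ) * s ^ (N + 3)) : ℝ) = Q
    field_simp
  rw [e1]
  have e2 : (1 / ρ) ^ N * ∏ k ∈ Finset.range N, (1 + ((k + d : ℕ) : ℝ) / N) =
      ∏ k ∈ Finset.range N, (1 / ρ + (k + d : ℕ) * (1 / (ρ * N))) := by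
    have : ∀ k : ℕ, 1 / ρ + (k + d : ℕ) * (1 / (ρ * N)) =
        (1 / ρ) * (1 + ((k + d : ℕ) : ℝ) / N) := by
      intro k
      field_simp
    simp_rw [this]
    rw [Finset.prod_mul_distrib, Finset.prod_const, Finset.card_range]
  rw [e2]
  refine Finset.prod_le_prod (fun k _ => by positivity) fun k _ => ?_
  gcongr

/-- The term `s = 0` contributes at most `1`, which the squared mean cancels in the variance. In
every other term at least one factor `1 / β` is to spare, and the binomial theorem sums them up. -/
theorem offdiag_num (N K : ℕ) (hN : 1 ≤ N) (ρ θ β X w : ℝ)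
    (hρ : 0 < ρ) (hθ : 0 ≤ θ) (hβ : 1 ≤ β) (hX : 1 ≤ X) (hw : 1 / β ≤ w)
    (H1 : θ * K * β ^ (N + 3) ≤ 1 / (ρ * N)) :
    ∑ s ∈ Finset.range N, (N.choose s : ℝ) * θ ^ s * (β ^ (s * (s + 3)) * (K : ℝ) ^ s) ≤
      1 + (X + 1 / ρ) ^ N * w := by
  have hN0 : (1 : ℝ) ≤ N := by exact_mod_cast hN
  have hβ0 : 0 < β := by linarith
  have hw0 : 0 ≤ w := le_trans (by positivity) hw
  have term : ∀ s ∈ Finset.range N,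
      (N.choose s : ℝ) * θ ^ s * (β ^ (s * (s + 3)) * (K : ℝ) ^ s) ≤
      (if s = 0 then 1 else 0) + (1 / ρ) ^ s * X ^ (N - s) * (N.choose s : ℝ) * w := by
    intro s hs
    have hsN := Finset.mem_range.mp hs
    by_cases h0 : s = 0
    · subst h0
      simp only [Nat.choose_zero_right, Nat.cast_one, pow_zero, zero_mul, mul_one, if_true]
      have : 0 ≤ 1 * X ^ (N - 0) * w := by positivity
      linarith
    · rw [if_neg h0, zero_add]
      have h1 : θ * K * β ^ (s + 3) * β ≤ 1 / ρ := by
        calc θ * K * β ^ (s + 3) * β = θ * K * β ^ (s + 4) := by ring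
          _ ≤ θ * K * β ^ (N + 3) := by
              refine mul_le_mul_of_nonneg_left ?_ (by positivity)
              exact pow_le_pow_right₀ hβ (by omega)
          _ ≤ 1 / (ρ * N) := H1
          _ ≤ 1 / ρ := by
              refine one_div_le_one_div_of_le hρ ?_
              nlinarith
      have h2 : θ ^ s * (β ^ (s * (s + 3)) * (K : ℝ) ^ s) * β ≤ (1 / ρ) ^ s := by
        calc θ ^ s * (β ^ (s * (s + 3)) * (K : ℝ) ^ s) * β
            ≤ θ ^ s * (β ^ (s * (s + 3)) * (K : ℝ) ^ s) * β ^ s := by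
              refine mul_le_mul_of_nonneg_left ?_ (by positivity)
              exact le_self_pow₀ hβ h0
          _ = (θ * K * β ^ (s + 3) * β) ^ s := by
              rw [mul_pow, mul_pow, mul_pow, ← pow_mul, mul_comm (s + 3) s]; ring
          _ ≤ _ := pow_le_pow_left₀ (by positivity) h1 s
      have h3 : θ ^ s * (β ^ (s * (s + 3)) * (K : ℝ) ^ s) ≤ (1 / ρ) ^ s * (1 / β) := by
        rw [mul_one_div, le_div_iff₀ hβ0]; exact h2
      calc (N.choose s : ℝ) * θ ^ s * (β ^ (s * (s + 3)) * (K : ℝ) ^ s)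
          = (N.choose s : ℝ) * (θ ^ s * (β ^ (s * (s + 3)) * (K : ℝ) ^ s)) := by ring
        _ ≤ (N.choose s : ℝ) * ((1 / ρ) ^ s * w) := by
            refine mul_le_mul_of_nonneg_left (h3.trans ?_) (by positivity)
            gcongr
        _ = (1 / ρ) ^ s * 1 * (N.choose s : ℝ) * w := by ring
        _ ≤ _ := by
            have := one_le_pow₀ hX (n := N - s)
            gcongr
  refine (Finset.sum_le_sum term).trans ?_
  rw [Finset.sum_add_distrib]
  refine add_le_add ?_ ?_
  · rw [Finset.sum_ite_eq' (Finset.range N) 0 (fun _ => (1 : ℝ))]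
    split_ifs <;> norm_num
  · rw [add_comm X, add_pow, ← Finset.sum_mul]
    refine mul_le_mul_of_nonneg_right ?_ hw0
    refine Finset.sum_le_sum_of_subset_of_nonneg (Finset.range_subset_range.mpr (by omega)) ?_
    intro s _ _
    positivity

/-- The sum of the diagonal terms, relative to the squared mean; the number `|vsets|` of terms is
at least `((n - 2) / N) ^ N`. -/
theorem diag_total (n K N : ℕ) (hN : 1 ≤ N) (hK : 1 ≤ K) (hn : 2 < n) (hNn : N ≤ n - 2)
    (q lam ρ r s : ℝ) (hlam : 0 < lam) (hρ : 0 < ρ) (i j : Fin n) (hij : i < j)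
    (ev : Fin K → Fin K → ℝ) (d : ℕ) (hev0 : ∀ k l, 0 ≤ ev k l)
    (hd : ∀ z : Lab n K, ev (z i) (z j) ≠ 0 → (Finset.image z {i, j}).card ≤ d)
    (hpos : 0 < ∑ z : Lab n K, ev (z i) (z j))
    (hr : 0 ≤ r) (hrs : r ≤ s)
    (hp0 : 0 ≤ q * (1 - q) + lam * (1 - 2 * q)) (hp : q * (1 - q) + lam * (1 - 2 * q) ≤ s ^ 2)
    (hq : q * (1 - q) = r ^ 2)
    (H1 : (N : ℝ) / ((n : ℝ) - 2) * K * (s / lam) ^ (N + 3) ≤ 1 / (ρ * N))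
    (H2 : (N : ℝ) / ((n : ℝ) - 2) * (K : ℝ) ^ 2 * (r / lam) ^ (N + 3) ≤ 1 / ρ) :
    ∑ A ∈ vsets i j N, J n K q lam i j ev A A ≤
      ((vsets i j N).card : ℝ) ^ 2 * (lam ^ (N * (N + 3)) / (K : ℝ) ^ (2 * N)) *
        ((1 / ρ) ^ N * ∏ k ∈ Finset.range N, (1 + ((k + d : ℕ) : ℝ) / N)) := by
  have hK0 : (0 : ℝ) < K := by exact_mod_cast hK
  have hn0 : (0 : ℝ) < (n : ℝ) - 2 := by
    have : (2 : ℝ) < n := by exact_mod_cast hn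
    linarith
  have hs : 0 ≤ s := hr.trans hrs
  set θ := (N : ℝ) / ((n : ℝ) - 2) with hθ
  have hθ0 : 0 ≤ θ := by rw [hθ]; positivity
  set D := (∏ k ∈ Finset.range N, (K * r ^ (N + 3) + (k + d : ℕ) * s ^ (N + 3))) / (K : ℝ) ^ N
    with hD
  have hD0 : 0 ≤ D := by
    rw [hD]
    exact div_nonneg (Finset.prod_nonneg fun k _ => by positivity) (by positivity)
  have h1 : ∑ A ∈ vsets i j N, J n K q lam i j ev A A ≤ (vsets i j N).card * D := by
    rw [← nsmul_eq_mul]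
    refine Finset.sum_le_card_nsmul _ _ _ fun A hA => ?_
    exact J_diag_le n K N (by omega) q lam i j hij ev d hev0 hd hpos A (notMem_of_mem_vsets hA)
      (Finset.mem_powersetCard.mp hA).2 r s hr hrs hp0 hp hq
  have h2 := diag_num N K d hN hK lam ρ θ r s hlam hρ hθ0 hr hs H1 H2
  have h3 := one_le_card_vsets_mul i j hij N hn hNn
  rw [← hθ] at h3
  rw [← hD] at h2
  set P := ((vsets i j N).card : ℝ)
  have hP0 : 0 ≤ P := Nat.cast_nonneg _
  calc _ ≤ P * D := h1
    _ ≤ P * D * (P * θ ^ N) := le_mul_of_one_le_right (by positivity) h3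
    _ = P ^ 2 * (lam ^ (N * (N + 3)) / (K : ℝ) ^ (2 * N)) *
        (θ ^ N * D * ((K : ℝ) ^ (2 * N) / lam ^ (N * (N + 3)))) := by
        field_simp
    _ ≤ _ := mul_le_mul_of_nonneg_left h2 (by positivity)

/-- The off-diagonal terms in the row of `A`, grouped by the size `t` of the overlap. -/
theorem offdiag_le (n K N : ℕ) (hK : K ≠ 0) (hn : 2 < n) (hNn : N ≤ n - 2)
    (q lam s : ℝ) (hlam : 0 < lam) (hs : 0 ≤ s) (i j : Fin n) (hij : i < j)
    (hp0 : 0 ≤ q * (1 - q) + lam * (1 - 2 * q)) (hp : q * (1 - q) + lam * (1 - 2 * q) ≤ s ^ 2)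
    (A : Finset (Fin n)) (hA : A ∈ vsets i j N) :
    ∑ A' ∈ (vsets i j N).erase A, J n K q lam i j evEq A A' ≤
      lam ^ (N * (N + 3)) / (K : ℝ) ^ (2 * N) * ((vsets i j N).card *
        ∑ t ∈ Finset.range N, (N.choose t : ℝ) * ((N : ℝ) / ((n : ℝ) - 2)) ^ t *
          ((s / lam) ^ (t * (t + 3)) * (K : ℝ) ^ t)) := by
  have hK0 : (0 : ℝ) < K := by exact_mod_cast Nat.pos_of_ne_zero hK
  refine le_trans ?_ (mul_le_mul_of_nonneg_left (sum_overlap_le i j hij N hn hNn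
    (fun t => (s / lam) ^ (t * (t + 3)) * (K : ℝ) ^ t) (fun t => by positivity) A hA)
    (by positivity))
  rw [Finset.mul_sum]
  refine Finset.sum_le_sum fun A' hA' => ?_
  obtain ⟨hne, hA'⟩ := Finset.mem_erase.mp hA'
  have hcA := (Finset.mem_powersetCard.mp hA).2
  have hcA' := (Finset.mem_powersetCard.mp hA').2
  have hns : ¬ A ⊆ A' := fun h => hne (Finset.eq_of_subset_of_card_le h (by rw [hcA, hcA'])).symm
  have hiA := notMem_of_mem_vsets hA
  have hiA' := notMem_of_mem_vsets hA'
  rw [J_eq_of_not_subset n K hK q lam hlam i j hij A A' hiA hiA' hns]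
  have c1 := card_Es i j hij A hiA
  have c2 := card_Es i j hij A' hiA'
  have c3 := card_Es i j hij (A ∩ A') ⟨by simp [hiA.1], by simp [hiA.2]⟩
  have c4 := Finset.card_union_add_card_inter A A'
  rw [hcA] at c1 c4
  rw [hcA'] at c2 c4
  set t := (A ∩ A').card
  have e1 : lam ^ (Es i j A).card * lam ^ (Es i j A').card = lam ^ (N * (N + 3)) := by
    rw [← pow_add]; congr 1; omega
  have e2 : ((q * (1 - q) + lam * (1 - 2 * q)) / lam ^ 2) ^ (Es i j (A ∩ A')).card ≤
      (s / lam) ^ (t * (t + 3)) := by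
    rw [← c3, pow_mul, div_pow s lam 2]
    refine pow_le_pow_left₀ (by positivity) ?_ _
    gcongr
  have e3 : (K : ℝ) ^ (2 * N) = (K : ℝ) ^ (A ∪ A').card * (K : ℝ) ^ t := by
    rw [← pow_add]; congr 1; omega
  rw [e1, e3]
  have e4 : lam ^ (N * (N + 3)) / ((K : ℝ) ^ (A ∪ A').card * (K : ℝ) ^ t) *
      ((s / lam) ^ (t * (t + 3)) * (K : ℝ) ^ t) =
      lam ^ (N * (N + 3)) * (s / lam) ^ (t * (t + 3)) / (K : ℝ) ^ (A ∪ A').card := by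
    field_simp
  rw [e4]
  gcongr

theorem rpow_half_eq (x : ℝ) (hx : 0 ≤ x) (N : ℕ) :
    x ^ ((((N + 2 : ℕ) : ℝ) + 1) / 2) = √x ^ (N + 3) := by
  rw [Real.sqrt_eq_rpow, ← Real.rpow_natCast, ← Real.rpow_mul hx]
  congr 1
  push_cast
  ring

theorem mean_eq (n K N : ℕ) (hN : 1 ≤ N) (hK : K ≠ 0) (q lam : ℝ) (hlam : 0 < lam) (i j : Fin n)
    (hij : i < j) :
    expecEq n K q lam i j (fun _ y => cliqueStat n q (N + 2) (by omega) i j y) =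
      N.factorial * ((vsets i j N).card * ((√lam ^ (N + 3)) ^ N / (K : ℝ) ^ N)) := by
  rw [expecEq_eq n K hK, mean_ev n K N q lam i j hij]
  congr 1
  rw [← nsmul_eq_mul]
  refine Finset.sum_eq_card_nsmul fun A hA => ?_
  have hiA := notMem_of_mem_vsets hA
  have hcA := (Finset.mem_powersetCard.mp hA).2
  have hne : ¬ A ⊆ ∅ := by
    intro h
    rw [Finset.subset_empty] at h
    rw [h, Finset.card_empty] at hcA
    omega
  rw [J_eq_of_not_subset n K hK q lam hlam i j hij A ∅ hiA (by simp) hne]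
  have c1 := card_Es i j hij A hiA
  rw [hcA] at c1
  simp only [Finset.inter_empty, Es_empty i j hij, Finset.card_empty, pow_zero, mul_one,
    Finset.union_empty, hcA]
  congr 1
  rw [← pow_mul, mul_comm (N + 3) N, ← c1, pow_mul, Real.sq_sqrt hlam.le]

/-! ### Means and variances -/

/-- The square of the conditional mean, in the normalization used for the second moments. -/
theorem mean_sq (n K N : ℕ) (hN : 1 ≤ N) (hK : K ≠ 0) (q lam : ℝ) (hlam : 0 < lam) (i j : Fin n)
    (hij : i < j) :
    expecEq n K q lam i j (fun _ y => cliqueStat n q (N + 2) (by omega) i j y) ^ 2 =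
      (N.factorial : ℝ) ^ 2 *
        (((vsets i j N).card : ℝ) ^ 2 * (lam ^ (N * (N + 3)) / (K : ℝ) ^ (2 * N))) := by
  rw [mean_eq n K N hN hK q lam hlam i j hij, mul_pow, mul_pow, div_pow]
  congr 3
  · rw [← pow_mul, ← pow_mul, show (N + 3) * (N * 2) = 2 * (N * (N + 3)) by ring, pow_mul,
      Real.sq_sqrt hlam.le]
  · rw [← pow_mul, mul_comm N 2]

theorem factorial_mul_card (n N : ℕ) (hNn : N ≤ n - 2) (i j : Fin n) (hij : i < j) :
    (N.factorial : ℝ) * (vsets i j N).card =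
      ((n - 2).factorial : ℝ) / ((n - (N + 2)).factorial : ℝ) := by
  rw [card_vsets i j hij, eq_div_iff (by positivity)]
  have h := Nat.choose_mul_factorial_mul_factorial hNn
  rw [show n - 2 - N = n - (N + 2) by omega] at h
  rw [← h]
  push_cast
  ring

theorem evEq_nonneg {K : ℕ} (k l : Fin K) : 0 ≤ evEq k l := by
  unfold evEq; split_ifs <;> norm_num

theorem evNe_nonneg {K : ℕ} (k l : Fin K) : 0 ≤ evNe k l := by
  unfold evNe; split_ifs <;> norm_num

theorem not_subset_of_ne {n N : ℕ} {i j : Fin n} {A A' : Finset (Fin n)}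
    (hA : A ∈ vsets i j N) (hA' : A' ∈ vsets i j N) (hne : A' ≠ A) : ¬ A ⊆ A' := fun h =>
  hne (Finset.eq_of_subset_of_card_le h
    (by rw [(Finset.mem_powersetCard.mp hA).2, (Finset.mem_powersetCard.mp hA').2])).symm

theorem expecNe_zero (n K N : ℕ) (hN : 1 ≤ N) (hK : K ≠ 0) (q lam : ℝ) (hlam : 0 < lam)
    (i j : Fin n) (hij : i < j) :
    expecNe n K q lam i j (fun _ y => cliqueStat n q (N + 2) (by omega) i j y) = 0 := by
  rw [expecNe_eq n K hK, mean_ev n K N q lam i j hij, Finset.sum_eq_zero, mul_zero]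
  intro A hA
  refine J_ne_of_not_subset n K q lam hlam i j A ∅ (notMem_of_mem_vsets hA) (by simp) fun h => ?_
  have hcA := (Finset.mem_powersetCard.mp hA).2
  rw [Finset.subset_empty] at h
  rw [h, Finset.card_empty] at hcA
  omega

/-- Here `r ^ 2 = q̄` and `s ^ 2` plays the role of `q̄ + λ ≥ p̄`. The part of the off-diagonal sum
with disjoint `A, A'` is absorbed by the squared mean. -/
theorem varEq_le (n K N : ℕ) (hN : 1 ≤ N) (hK : 1 ≤ K) (hn : 2 < n) (hNn : N ≤ n - 2)
    (q lam ρ r s X w : ℝ) (hlam : 0 < lam) (hρ : 0 < ρ) (i j : Fin n) (hij : i < j)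
    (hr : 0 ≤ r) (hrs : r ≤ s)
    (hp0 : 0 ≤ q * (1 - q) + lam * (1 - 2 * q)) (hp : q * (1 - q) + lam * (1 - 2 * q) ≤ s ^ 2)
    (hq : q * (1 - q) = r ^ 2) (hls : lam ≤ s) (hX : 1 ≤ X) (hw : 1 / (s / lam) ≤ w)
    (H1 : (N : ℝ) / ((n : ℝ) - 2) * K * (s / lam) ^ (N + 3) ≤ 1 / (ρ * N))
    (H2 : (N : ℝ) / ((n : ℝ) - 2) * (K : ℝ) ^ 2 * (r / lam) ^ (N + 3) ≤ 1 / ρ) :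
    varEq n K q lam i j (fun _ y => cliqueStat n q (N + 2) (by omega) i j y) ≤
      expecEq n K q lam i j (fun _ y => cliqueStat n q (N + 2) (by omega) i j y) ^ 2 *
        ((2 / ρ) ^ N + (X + 1 / ρ) ^ N * w) := by
  have hK' : K ≠ 0 := by omega
  have hK0 : (0 : ℝ) < K := by exact_mod_cast hK
  have hn0 : (0 : ℝ) < (n : ℝ) - 2 := by
    have : (2 : ℝ) < n := by exact_mod_cast hn
    linarith
  unfold varEq
  rw [mean_sq n K N hN hK' q lam hlam i j hij, expecEq_eq n K hK', sq_ev n K N q lam i j hij]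
  have hsplit : ∀ A ∈ vsets i j N, ∑ A' ∈ vsets i j N, J n K q lam i j evEq A A' =
      J n K q lam i j evEq A A + ∑ A' ∈ (vsets i j N).erase A, J n K q lam i j evEq A A' :=
    fun A hA => (Finset.add_sum_erase _ _ hA).symm
  rw [Finset.sum_congr rfl hsplit, Finset.sum_add_distrib]
  have hdiag := diag_total n K N hN hK hn hNn q lam ρ r s hlam hρ i j hij evEq 1 evEq_nonneg
    (by
      intro z hz
      have hz' : z i = z j := by
        by_contra h
        exact hz (by simp [evEq, h])
      simp [Finset.image_insert, hz'])
    (by rw [sum_evEq n K i j hij]; positivity) hr hrs hp0 hp hq H1 H2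
  have hnum := offdiag_num N K hN ρ ((N : ℝ) / ((n : ℝ) - 2)) (s / lam) X w hρ (by positivity)
    ((one_le_div hlam).mpr hls) hX hw H1
  set P := ((vsets i j N).card : ℝ) with hP
  have hP0 : 0 ≤ P := Nat.cast_nonneg _
  set c := lam ^ (N * (N + 3)) / (K : ℝ) ^ (2 * N) with hc
  have hc0 : 0 ≤ c := by positivity
  have hoff : ∑ A ∈ vsets i j N, ∑ A' ∈ (vsets i j N).erase A, J n K q lam i j evEq A A' ≤
      P * (c * (P * (1 + (X + 1 / ρ) ^ N * w))) := by
    rw [hP, ← nsmul_eq_mul]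
    refine Finset.sum_le_card_nsmul _ _ _ fun A hA => ?_
    refine (offdiag_le n K N hK' hn hNn q lam s hlam (hr.trans hrs) i j hij hp0 hp A hA).trans ?_
    gcongr
  have hd2 : P ^ 2 * c * ((1 / ρ) ^ N * ∏ k ∈ Finset.range N, (1 + ((k + 1 : ℕ) : ℝ) / N)) ≤
      P ^ 2 * c * (2 / ρ) ^ N := by
    refine mul_le_mul_of_nonneg_left ?_ (by positivity)
    calc _ ≤ (1 / ρ) ^ N * 2 ^ N :=
          mul_le_mul_of_nonneg_left (prod_one_le N hN) (by positivity)
      _ = (2 / ρ) ^ N := by rw [← mul_pow]; congr 1; ring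
  have hf : (0 : ℝ) ≤ (N.factorial : ℝ) ^ 2 := by positivity
  have := mul_le_mul_of_nonneg_left (add_le_add (hdiag.trans hd2) hoff) hf
  linarith

/-- Only the diagonal terms survive, with `i` and `j` using two labels. -/
theorem varNe_le (n K N : ℕ) (hN : 1 ≤ N) (hK : 2 ≤ K) (hn : 2 < n) (hNn : N ≤ n - 2)
    (q lam ρ r s : ℝ) (hlam : 0 < lam) (hρ : 0 < ρ) (i j : Fin n) (hij : i < j)
    (hr : 0 ≤ r) (hrs : r ≤ s)
    (hp0 : 0 ≤ q * (1 - q) + lam * (1 - 2 * q)) (hp : q * (1 - q) + lam * (1 - 2 * q) ≤ s ^ 2)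
    (hq : q * (1 - q) = r ^ 2)
    (H1 : (N : ℝ) / ((n : ℝ) - 2) * K * (s / lam) ^ (N + 3) ≤ 1 / (ρ * N))
    (H2 : (N : ℝ) / ((n : ℝ) - 2) * (K : ℝ) ^ 2 * (r / lam) ^ (N + 3) ≤ 1 / ρ) :
    varNe n K q lam i j (fun _ y => cliqueStat n q (N + 2) (by omega) i j y) ≤
      expecEq n K q lam i j (fun _ y => cliqueStat n q (N + 2) (by omega) i j y) ^ 2 *
        ((2 / ρ) ^ N + (1 / ρ) ^ N) := by
  have hK' : K ≠ 0 := by omega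
  have hK0 : (0 : ℝ) < K := by exact_mod_cast Nat.pos_of_ne_zero hK'
  unfold varNe
  rw [expecNe_zero n K N hN hK' q lam hlam i j hij, mean_sq n K N hN hK' q lam hlam i j hij,
    expecNe_eq n K hK', sq_ev n K N q lam i j hij]
  have hsplit : ∀ A ∈ vsets i j N, ∑ A' ∈ vsets i j N, J n K q lam i j evNe A A' =
      J n K q lam i j evNe A A := by
    intro A hA
    refine Finset.sum_eq_single_of_mem A hA fun A' hA' hne => ?_
    exact J_ne_of_not_subset n K q lam hlam i j A A' (notMem_of_mem_vsets hA)
      (notMem_of_mem_vsets hA') (not_subset_of_ne hA hA' hne)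
  rw [Finset.sum_congr rfl hsplit]
  have hdiag := diag_total n K N hN (by omega) hn hNn q lam ρ r s hlam hρ i j hij evNe 2
    evNe_nonneg (fun z _ => Finset.card_image_le.trans Finset.card_le_two)
    (sum_evNe_pos n K hK i j hij) hr hrs hp0 hp hq H1 H2
  have hd2 : (1 / ρ) ^ N * ∏ k ∈ Finset.range N, (1 + ((k + 2 : ℕ) : ℝ) / N) ≤
      (2 / ρ) ^ N + (1 / ρ) ^ N := by
    calc _ ≤ (1 / ρ) ^ N * (2 ^ N + 1) :=
          mul_le_mul_of_nonneg_left (prod_two_le N hN) (by positivity)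
      _ = (2 / ρ) ^ N + (1 / ρ) ^ N := by rw [mul_add, ← mul_pow]; ring
  have := mul_le_mul_of_nonneg_left
    (hdiag.trans (mul_le_mul_of_nonneg_left hd2 (by positivity))) (sq_nonneg (N.factorial : ℝ))
  linarith

theorem statement2 (n K m : ℕ) (q lam : ℝ) (i j : Fin n)
    (hq0 : 0 ≤ q) (hq : q ≤ 1 / 2) (hql : q + 2 * lam ≤ 1) (hlam : 0 < lam)
    (hm3 : 3 ≤ m) (hmK : m ≤ K) (hKn : K ≤ n) (hij : i < j) :
    expecEq n K q lam i j (fun _ y => cliqueStat n q m (by omega) i j y) =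
      (Nat.factorial (n - 2) : ℝ) / (Nat.factorial (n - m)) *
        (lam ^ (((m : ℝ) + 1) / 2) / K) ^ (m - 2) ∧
    expecNe n K q lam i j (fun _ y => cliqueStat n q m (by omega) i j y) = 0 ∧
    ∀ ρ : ℝ, 0 < ρ →
      ((n : ℝ) - 2) * lam ^ (((m : ℝ) + 1) / 2) / K ≥
        ρ * ((m : ℝ) - 2) ^ 2 * (1 + q * (1 - q) / lam) ^ (((m : ℝ) + 1) / 2) →
      ((n : ℝ) - 2) / (K : ℝ) ^ 2 * (lam ^ 2 / (q * (1 - q))) ^ (((m : ℝ) + 1) / 2) ≥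
        ρ * ((m : ℝ) - 2) →
      (varEq n K q lam i j (fun _ y => cliqueStat n q m (by omega) i j y) ≤
        expecEq n K q lam i j (fun _ y => cliqueStat n q m (by omega) i j y) ^ 2 *
          ((2 / ρ) ^ (m - 2) +
            (((m : ℝ) - 2) * (1 + q * (1 - q) / lam) ^ (m + 1) + 1 / ρ) ^ (m - 2) *
              (1 + q * (1 - q) / lam) ^ ((1 : ℝ) / 2) * lam ^ ((1 : ℝ) / 2)) ∧
       varNe n K q lam i j (fun _ y => cliqueStat n q m (by omega) i j y) ≤
        expecEq n K q lam i j (fun _ y => cliqueStat n q m (by omega) i j y) ^ 2 *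
          ((2 / ρ) ^ (m - 2) + (1 / ρ) ^ (m - 2))) := by
  obtain ⟨N, rfl⟩ : ∃ N, m = N + 2 := ⟨m - 2, by omega⟩
  have hN : 1 ≤ N := by omega
  have hK' : K ≠ 0 := by omega
  have hNn : N ≤ n - 2 := by omega
  have hn : 2 < n := by omega
  rw [Nat.add_sub_cancel, rpow_half_eq lam hlam.le]
  refine ⟨?_, expecNe_zero n K N hN hK' q lam hlam i j hij, ?_⟩
  · rw [mean_eq n K N hN hK' q lam hlam i j hij, ← mul_assoc,
      factorial_mul_card n N hNn i j hij, div_pow]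
  intro ρ hρ h1 h2
  have hcast : ((N + 2 : ℕ) : ℝ) - 2 = N := by push_cast; ring
  have hqb0 : 0 ≤ q * (1 - q) := mul_nonneg hq0 (by linarith)
  have ha1 : 1 ≤ 1 + q * (1 - q) / lam := by
    have : 0 ≤ q * (1 - q) / lam := by positivity
    linarith
  rw [hcast, rpow_half_eq _ (by linarith)] at h1
  rw [hcast, rpow_half_eq _ (by positivity)] at h2
  rw [hcast, ← Real.sqrt_eq_rpow, ← Real.sqrt_eq_rpow]
  have hN0 : (0 : ℝ) < N := by exact_mod_cast hN
  have hN1 : (1 : ℝ) ≤ N := by exact_mod_cast hN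
  have hK0 : (0 : ℝ) < K := by exact_mod_cast Nat.pos_of_ne_zero hK'
  have hn0 : (0 : ℝ) < (n : ℝ) - 2 := by
    have : (2 : ℝ) < n := by exact_mod_cast hn
    linarith
  set a := 1 + q * (1 - q) / lam with ha
  -- With `q̄ = 0` the left side of the second condition is `0` (division by zero), so it fails.
  have hqb : 0 < q * (1 - q) := by
    rcases hqb0.eq_or_lt with h | h
    · rw [← h] at h2
      simp only [div_zero, Real.sqrt_zero] at h2
      rw [zero_pow (by omega), mul_zero] at h2
      have : 0 < ρ * N := by positivity
      linarith
    · exact h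
  set r := √(q * (1 - q)) with hr
  have hr0 : 0 < r := Real.sqrt_pos.mpr hqb
  have hr2 : q * (1 - q) = r ^ 2 := (Real.sq_sqrt hqb0).symm
  set l := √lam with hl
  have hl0 : 0 < l := Real.sqrt_pos.mpr hlam
  have hl2 : lam = l ^ 2 := (Real.sq_sqrt hlam.le).symm
  set b := √a with hb
  have hb2 : a = b ^ 2 := (Real.sq_sqrt (by linarith)).symm
  have hb1 : 1 ≤ b := Real.one_le_sqrt.mpr ha1
  have hs2 : q * (1 - q) + lam = (l * b) ^ 2 := by
    rw [mul_pow, ← hl2, ← hb2, ha]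
    field_simp
    ring
  have hslam : l * b / lam = b / l := by
    rw [hl2]; field_simp
  have hl1 : l ≤ 1 := by
    exact Real.sqrt_le_one.mpr (by linarith)
  have hrs : r ≤ l * b := by
    rw [hr]
    refine Real.sqrt_le_iff.mpr ⟨by positivity, ?_⟩
    linarith
  have hp0 : 0 ≤ q * (1 - q) + lam * (1 - 2 * q) :=
    add_nonneg hqb0 (mul_nonneg hlam.le (by linarith))
  have hp : q * (1 - q) + lam * (1 - 2 * q) ≤ (l * b) ^ 2 := by
    rw [← hs2]
    nlinarith [mul_nonneg hlam.le hq0]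
  have H1 : (N : ℝ) / ((n : ℝ) - 2) * K * (l * b / lam) ^ (N + 3) ≤ 1 / (ρ * N) := by
    rw [hslam, div_pow]
    rw [ge_iff_le, le_div_iff₀ hK0] at h1
    have : (N : ℝ) / ((n : ℝ) - 2) * K * (b ^ (N + 3) / l ^ (N + 3)) =
        (N * K * b ^ (N + 3)) / (((n : ℝ) - 2) * l ^ (N + 3)) := by field_simp
    rw [this, div_le_div_iff₀ (by positivity) (by positivity)]
    linarith
  have H2 : (N : ℝ) / ((n : ℝ) - 2) * (K : ℝ) ^ 2 * (r / lam) ^ (N + 3) ≤ 1 / ρ := by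
    rw [Real.sqrt_div (by positivity), Real.sqrt_sq hlam.le, ← hr, div_pow] at h2
    rw [div_pow]
    have e1 : ((n : ℝ) - 2) / (K : ℝ) ^ 2 * (lam ^ (N + 3) / r ^ (N + 3)) =
        (((n : ℝ) - 2) * lam ^ (N + 3)) / ((K : ℝ) ^ 2 * r ^ (N + 3)) := by field_simp
    rw [e1, ge_iff_le, le_div_iff₀ (by positivity)] at h2
    have : (N : ℝ) / ((n : ℝ) - 2) * (K : ℝ) ^ 2 * (r ^ (N + 3) / lam ^ (N + 3)) =
        (N * (K : ℝ) ^ 2 * r ^ (N + 3)) / (((n : ℝ) - 2) * lam ^ (N + 3)) := by field_simp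
    rw [this, div_le_div_iff₀ (by positivity) (by positivity)]
    linarith
  refine ⟨?_, varNe_le n K N hN (by omega) hn hNn q lam ρ r (l * b) hlam hρ i j hij hr0.le hrs
    hp0 hp hr2 H1 H2⟩
  rw [mul_assoc _ b l]
  refine varEq_le n K N hN (by omega) hn hNn q lam ρ r (l * b) (N * a ^ (N + 3)) (b * l) hlam hρ
    i j hij hr0.le hrs hp0 hp hr2 ?_ ?_ ?_ H1 H2
  · calc lam = l * l := by rw [← sq]; exact hl2
      _ ≤ l * b := mul_le_mul_of_nonneg_left (hl1.trans hb1) hl0.le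
  · exact one_le_mul_of_one_le_of_one_le hN1 (one_le_pow₀ ha1)
  · rw [hslam, one_div_div, div_le_iff₀ (by linarith)]
    calc l = 1 * l * 1 := by ring
      _ ≤ b * l * b := by gcongr

end SBM
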